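/- Assume hypothesis (H) holds and let h0 ∈ L^{ψ,1}(Ω, K). If there exists α ∈ [0, 1/2) such that |g_n(x)| ≤ α · min{|J_{f_n}(x)|/(K·L), 1/N} for all n ∈ {1,…,N} and almost all x ∈ Ω, then the series Σ_{n=0}^{∞} Pⁿh0 converges in L^{ψ,1}(Ω, K) to the unique solution φ ∈ L^{ψ,1}(Ω, K) of the equation φ = Pφ + h0, and for every m ∈ ℕ one has ‖Σ_{n=m}^{∞} Pⁿh0‖_{L^{ψ,1}(Ω,K)} ≤ (2α)^m (1 − 2α)^{-1} ‖h0‖_{L^{ψ,1}(Ω,K)}. -/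

import Mathlib

open MeasureTheory Filter Topology Set
open scoped ENNReal

/-- A (finite-valued) Young function: non-decreasing, left-continuous and convex on
`[0, ∞)`, with `ψ 0 = 0 = lim_{t→0+} ψ t` and `lim_{t→∞} ψ t = ∞`. -/
def IsYoung (ψ : ℝ → ℝ) : Prop :=
  MonotoneOn ψ (Set.Ici 0) ∧
  ConvexOn ℝ (Set.Ici 0) ψ ∧
  (∀ t : ℝ, 0 < t → Tendsto ψ (𝓝[<] t) (𝓝 (ψ t))) ∧
  ψ 0 = 0 ∧ Tendsto ψ (𝓝[>] 0) (𝓝 0) ∧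
  Tendsto ψ atTop atTop

/-- The Young function `ψ` satisfies condition `Δ₂` globally. -/
def Delta2 (ψ : ℝ → ℝ) : Prop :=
  ∃ d : ℝ, 1 < d ∧ ∀ t : ℝ, 0 < t → ψ (2 * t) ≤ d * ψ t

/-- `x0` is a density point of the set `S` (w.r.t. `k`-dimensional Lebesgue measure). -/
def IsDensityPt {k : ℕ} (S : Set (EuclideanSpace ℝ (Fin k)))
    (x0 : EuclideanSpace ℝ (Fin k)) : Prop :=
  Tendsto (fun r : ℝ =>
      volume (S ∩ Metric.closedBall x0 r) / volume (Metric.closedBall x0 r))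
    (𝓝[>] 0) (𝓝 1)

/-- The linear map `L` is an approximate differential of `F` at `x0 ∈ Ω`. -/
def HasApproxDerivAt {k : ℕ} (Ω : Set (EuclideanSpace ℝ (Fin k)))
    (F : EuclideanSpace ℝ (Fin k) → EuclideanSpace ℝ (Fin k))
    (L : EuclideanSpace ℝ (Fin k) →L[ℝ] EuclideanSpace ℝ (Fin k))
    (x0 : EuclideanSpace ℝ (Fin k)) : Prop :=
  ∀ ε : ℝ, 0 < ε →
    IsDensityPt {x | x ∈ Ω \ {x0} ∧ ‖F x - F x0 - L (x - x0)‖ / ‖x - x0‖ < ε} x0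

/-- The distribution function `μ_f(s) = μ {x ∈ Ω : |f x| > s}` of `f : Ω → 𝕜`. -/
noncomputable def distribFn {k : ℕ} {𝕜 : Type*} [RCLike 𝕜]
    (Ω : Set (EuclideanSpace ℝ (Fin k))) (f : EuclideanSpace ℝ (Fin k) → 𝕜)
    (s : ℝ) : ℝ≥0∞ :=
  volume {x | x ∈ Ω ∧ s < ‖f x‖}

/-- The `[0, ∞]`-valued extension of `σ = τ⁻¹ : [0, ∞) → [0, ∞)`. -/
noncomputable def extInv (σ : ℝ → ℝ) : ℝ≥0∞ → ℝ≥0∞ :=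
  fun a => if a = ∞ then ∞ else ENNReal.ofReal (σ a.toReal)

/-- The Lorentz norm `‖f‖_{L^{ψ,1}(Ω,𝕜)} = ∫₀^∞ τ⁻¹(μ_f(s)) ds`, where `σ = τ⁻¹`. -/
noncomputable def lorentzNorm {k : ℕ} {𝕜 : Type*} [RCLike 𝕜]
    (Ω : Set (EuclideanSpace ℝ (Fin k))) (σ : ℝ → ℝ)
    (f : EuclideanSpace ℝ (Fin k) → 𝕜) : ℝ≥0∞ :=
  ∫⁻ s in Set.Ioi (0 : ℝ), extInv σ (distribFn Ω f s)

/-- Membership in the Lorentz space `L^{ψ,1}(Ω,𝕜)`. -/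
def MemLorentz {k : ℕ} {𝕜 : Type*} [RCLike 𝕜]
    (Ω : Set (EuclideanSpace ℝ (Fin k))) (σ : ℝ → ℝ)
    (f : EuclideanSpace ℝ (Fin k) → 𝕜) : Prop :=
  Measurable f ∧ LocallyIntegrableOn f Ω volume ∧ lorentzNorm Ω σ f < ∞

/-- The linear operator `P φ = ∑ n, g n · (φ ∘ f n)`. -/
noncomputable def Pop {k N : ℕ} {𝕜 : Type*} [RCLike 𝕜]
    (f : Fin N → EuclideanSpace ℝ (Fin k) → EuclideanSpace ℝ (Fin k))
    (g : Fin N → EuclideanSpace ℝ (Fin k) → 𝕜)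
    (φ : EuclideanSpace ℝ (Fin k) → 𝕜) : EuclideanSpace ℝ (Fin k) → 𝕜 :=
  fun x => ∑ n : Fin N, g n x * φ (f n x)

/-
Since `σ = τ⁻¹` is increasing and `σ t / t` is decreasing, the functional
`Λ(F) = ∫₀^∞ σ(μ{F > s}) ds` satisfies `Λ(F + V) ≤ Λ(F) + 2 b σ(u)` as soon as `V ≤ b` and
`∫ V ≤ b u`. If a positive operator `κ` is bounded by `b` on `L^∞` and on `L¹`, then applying this
to the images `V` of the layers of `G` gives `Λ(F + κ G) ≤ Λ(F) + 2 b Λ(G)`, even though `Λ` need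
not be subadditive. Iterating, the tails of the Neumann series of `κ` are controlled by the
geometric series of ratio `2 b`.

The operator `P` is dominated by the positive operator `κ G = ∑ |g_n| (G ∘ f_n)`, for which one can
take `b = α`. The bound on `L^∞` is `∑ |g_n| ≤ α`. The bound on `L¹` is an area inequality: an
approximately differentiable map is Lipschitz on countably many pieces covering almost everything,
hence injective and differentiable on countably many pieces covering almost all points with
`J ≠ 0`, and the change of variables on these pieces gives
`∑ ∫ |J_{f_n}| (G ∘ f_n) ≤ K L ∫ G`, because fibres have at most `K` points and at most `L` of the
images overlap.
-/

open ProbabilityTheory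
open scoped NNReal

/-- A quasi-concave function on `[0, ∞]`: `E` is increasing, vanishes only at `0`, is finite on
finite arguments, and `a ↦ E a / a` is decreasing (in the division-free form `mul_le_mul`). For
such an `E`, lower semicontinuity only adds left-continuity at `∞`. These are the fundamental
functions of the Lorentz-type spaces considered here. -/
structure IsQuasiconcave (E : ℝ≥0∞ → ℝ≥0∞) : Prop where
  monotone : Monotone E
  map_eq_zero : ∀ a, E a = 0 ↔ a = 0
  map_ne_top : ∀ a, a ≠ ∞ → E a ≠ ∞
  mul_le_mul : ∀ a b, a ≤ b → a * E b ≤ b * E a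
  lowerSemicontinuous : LowerSemicontinuous E

namespace IsQuasiconcave

variable {E : ℝ≥0∞ → ℝ≥0∞}

lemma le_mul_div (hE : IsQuasiconcave E) {a b : ℝ≥0∞} (hab : a ≤ b) (ha : a ≠ 0)
    (ha' : a ≠ ∞) : E b ≤ b * (E a / a) := by
  rw [← mul_div_assoc, ENNReal.le_div_iff_mul_le (Or.inl ha) (Or.inl ha'), mul_comm]
  exact hE.mul_le_mul a b hab

lemma div_le_div (hE : IsQuasiconcave E) {a b : ℝ≥0∞} (hab : a ≤ b) (ha : a ≠ 0)
    (ha' : a ≠ ∞) : E b / b ≤ E a / a := by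
  refine ENNReal.div_le_of_le_mul ?_
  rw [mul_comm]
  exact hE.le_mul_div hab ha ha'

lemma map_add_le (hE : IsQuasiconcave E) {a : ℝ≥0∞} (ha : a ≠ 0) (d : ℝ≥0∞) :
    E (a + d) ≤ E a + d * (E a / a) := by
  obtain rfl | ha' := eq_or_ne a ∞
  · simp
  calc E (a + d) ≤ (a + d) * (E a / a) := hE.le_mul_div le_self_add ha ha'
    _ = E a + d * (E a / a) := by rw [add_mul, ENNReal.mul_div_cancel ha ha']

lemma map_add_add_map_min_le (hE : IsQuasiconcave E) (m d : ℝ≥0∞) {u : ℝ≥0∞} (hu : u ≠ 0)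
    (hu' : u ≠ ∞) :
    E (m + d) + E (min m u) ≤ E m + E (min (m + d) u) + d * (E u / u) := by
  rcases le_total (m + d) u with h | h
  · rw [min_eq_left h, min_eq_left (le_self_add.trans h), add_comm (E m)]
    exact le_self_add
  rw [min_eq_right h]
  rcases le_total m u with hm | hm
  · obtain ⟨e, rfl⟩ := exists_add_of_le hm
    have hed : m + d = (m + e) + (m + d - (m + e)) := (add_tsub_cancel_of_le h).symm
    have hle : m + d - (m + e) ≤ d := by
      rw [tsub_le_iff_left]
      gcongr
    rw [min_eq_left hm, add_comm, add_assoc]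
    gcongr
    rw [hed]
    refine (hE.map_add_le hu _).trans ?_
    gcongr
  · rw [min_eq_right hm, add_right_comm]
    gcongr
    refine (hE.map_add_le (hu.bot_lt.trans_le hm).ne' d).trans ?_
    gcongr E m + d * ?_
    exact hE.div_le_div hm hu hu'

lemma map_liminf_le {ι : Type*} {l : Filter ι} (hE : IsQuasiconcave E) (u : ι → ℝ≥0∞) :
    E (liminf u l) ≤ liminf (fun i => E (u i)) l := by
  refine le_of_forall_lt_imp_le_of_dense fun y hy => le_liminf_of_le (by isBoundedDefault) ?_
  obtain hu | hu := (bot_le : 0 ≤ liminf u l).eq_or_lt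
  · exact Eventually.of_forall fun i => (hy.trans_le (hE.monotone (hu ▸ bot_le))).le
  have hnhds : ∀ᶠ a in 𝓝[<] liminf u l, y < E a :=
    nhdsWithin_le_nhds (hE.lowerSemicontinuous _ y hy)
  have : (𝓝[<] liminf u l).NeBot := nhdsLT_neBot_of_exists_lt ⟨0, hu⟩
  obtain ⟨a, hya, ha⟩ := (hnhds.and self_mem_nhdsWithin).exists
  filter_upwards [eventually_lt_of_lt_liminf ha] with i hi
  exact (hya.trans_le (hE.monotone hi.le)).le

end IsQuasiconcave

section LorentzFunctional

variable {X : Type*} [MeasurableSpace X] {μ : Measure X} {E : ℝ≥0∞ → ℝ≥0∞}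

/-- The Lorentz functional `∫₀^∞ E (μ {F > s}) ds` of a `[0, ∞]`-valued function `F`. -/
noncomputable def lorentzFunctional (E : ℝ≥0∞ → ℝ≥0∞) (μ : Measure X) (F : X → ℝ≥0∞) : ℝ≥0∞ :=
  ∫⁻ s in Ioi (0 : ℝ), E (μ {x | ENNReal.ofReal s < F x})

lemma antitone_measure_superlevel (μ : Measure X) (F : X → ℝ≥0∞) :
    Antitone fun s : ℝ => μ {x | ENNReal.ofReal s < F x} := fun _ _ hst =>
  measure_mono fun _ hx => (ENNReal.ofReal_le_ofReal hst).trans_lt hx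

lemma measurable_comp_measure_superlevel (hE : Monotone E) (μ : Measure X) (F : X → ℝ≥0∞) :
    Measurable fun s : ℝ => E (μ {x | ENNReal.ofReal s < F x}) :=
  (hE.comp_antitone (antitone_measure_superlevel μ F)).measurable

lemma lorentzFunctional_mono_ae (hE : Monotone E) {F G : X → ℝ≥0∞}
    (h : ∀ᵐ x ∂μ, F x ≤ G x) : lorentzFunctional E μ F ≤ lorentzFunctional E μ G := by
  refine lintegral_mono fun s => hE (measure_mono_ae ?_)
  filter_upwards [h] with x hx hs using lt_of_lt_of_le hs hx

lemma lorentzFunctional_zero (hE : E 0 = 0) : lorentzFunctional E μ (fun _ => 0) = 0 := by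
  simp [lorentzFunctional, hE]

lemma measure_superlevel_le_liminf {F : ℕ → X → ℝ≥0∞} {G : X → ℝ≥0∞}
    (hF : ∀ j, Measurable (F j))
    (h : ∀ x, Tendsto (fun j => F j x) atTop (𝓝 (G x))) (a : ℝ≥0∞) :
    μ {x | a < G x} ≤ liminf (fun j => μ {x | a < F j x}) atTop := by
  have hind (H : X → ℝ≥0∞) (hH : Measurable H) :
      ∫⁻ x, {x | a < H x}.indicator 1 x ∂μ = μ {x | a < H x} :=
    lintegral_indicator_one (measurableSet_lt measurable_const hH)
  rw [← hind G (measurable_of_tendsto_metrizable hF (tendsto_pi_nhds.2 h))]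
  simp_rw [← fun j => hind (F j) (hF j)]
  refine (lintegral_mono fun x => ?_).trans <| lintegral_liminf_le fun j =>
    measurable_one.indicator (measurableSet_lt measurable_const (hF j))
  by_cases hx : a < G x
  · refine le_liminf_of_le (by isBoundedDefault) ?_
    filter_upwards [(h x).eventually_const_lt hx] with j hj
    simp [hx, hj]
  · simp [hx]

lemma lorentzFunctional_le_of_tendsto (hE : IsQuasiconcave E) {F : ℕ → X → ℝ≥0∞}
    {G : X → ℝ≥0∞} (hF : ∀ j, Measurable (F j))
    (h : ∀ x, Tendsto (fun j => F j x) atTop (𝓝 (G x))) {C : ℝ≥0∞}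
    (hC : ∀ j, lorentzFunctional E μ (F j) ≤ C) : lorentzFunctional E μ G ≤ C := by
  calc lorentzFunctional E μ G
      ≤ ∫⁻ s in Ioi (0 : ℝ), liminf (fun j => E (μ {x | ENNReal.ofReal s < F j x})) atTop :=
        lintegral_mono fun s => (hE.monotone (measure_superlevel_le_liminf hF h _)).trans
          (hE.map_liminf_le _)
    _ ≤ liminf (fun j => lorentzFunctional E μ (F j)) atTop :=
        lintegral_liminf_le fun j => measurable_comp_measure_superlevel hE.monotone μ (F j)
    _ ≤ C := liminf_le_of_le (by isBoundedDefault) fun b hb => by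
        obtain ⟨j, hj⟩ := hb.exists
        exact hj.trans (hC j)

lemma volume_Ioi_restrict_ofReal_lt (c : ℝ≥0∞) :
    volume.restrict (Ioi (0 : ℝ)) {s | ENNReal.ofReal s < c} = c := by
  rw [Measure.restrict_apply' measurableSet_Ioi]
  obtain rfl | hc := eq_or_ne c ∞
  · simp
  · have : {s | ENNReal.ofReal s < c} ∩ Ioi 0 = Ioo 0 c.toReal := by
      ext s
      simp only [mem_inter_iff, mem_ofPred_eq, mem_Ioi, mem_Ioo, and_comm (a := 0 < s)]
      exact and_congr_left fun hs => ENNReal.ofReal_lt_iff_lt_toReal hs.le hc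
    rw [this, Real.volume_Ioo, sub_zero, ENNReal.ofReal_toReal hc]

lemma volume_Ioi_restrict_le_ofReal_lt (a c : ℝ≥0∞) :
    volume.restrict (Ioi (0 : ℝ)) {s | a ≤ ENNReal.ofReal s ∧ ENNReal.ofReal s < c} = c - a := by
  obtain rfl | ha := eq_or_ne a ∞
  · simp
  rcases le_total c a with hca | hac
  · rw [tsub_eq_zero_of_le hca]
    convert measure_empty (μ := volume.restrict (Ioi (0 : ℝ)))
    exact eq_empty_of_forall_notMem fun s hs => (hs.2.trans_le hca).not_ge hs.1
  · have hdiff : {s | a ≤ ENNReal.ofReal s ∧ ENNReal.ofReal s < c} =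
        {s | ENNReal.ofReal s < c} \ {s | ENNReal.ofReal s < a} := by
      ext s
      simp [and_comm]
    have hsub : {s | ENNReal.ofReal s < a} ⊆ {s | ENNReal.ofReal s < c} :=
      fun s hs => lt_of_lt_of_le hs hac
    have hmeas : MeasurableSet {s | ENNReal.ofReal s < a} :=
      measurableSet_lt (by fun_prop) measurable_const
    rw [hdiff, measure_sdiff hsub hmeas.nullMeasurableSet (by rwa [volume_Ioi_restrict_ofReal_lt]),
      volume_Ioi_restrict_ofReal_lt, volume_Ioi_restrict_ofReal_lt]

lemma lintegral_measure_le_ofReal_lt [SFinite μ] {F H : X → ℝ≥0∞} (hF : Measurable F)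
    (hH : Measurable H) :
    ∫⁻ s in Ioi (0 : ℝ), μ {x | F x ≤ ENNReal.ofReal s ∧ ENNReal.ofReal s < H x} =
      ∫⁻ x, H x - F x ∂μ := by
  have hm : MeasurableSet {p : ℝ × X |
      F p.2 ≤ ENNReal.ofReal p.1 ∧ ENNReal.ofReal p.1 < H p.2} := by
    have hle : MeasurableSet {p : ℝ × X | F p.2 ≤ ENNReal.ofReal p.1} :=
      measurableSet_le (by fun_prop) (by fun_prop)
    have hlt : MeasurableSet {p : ℝ × X | ENNReal.ofReal p.1 < H p.2} :=
      measurableSet_lt (by fun_prop) (by fun_prop)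
    exact hle.inter hlt
  refine ((Measure.prod_apply hm).symm.trans (Measure.prod_apply_symm hm)).trans ?_
  exact lintegral_congr fun x => volume_Ioi_restrict_le_ofReal_lt (F x) (H x)

lemma lintegral_measure_ofReal_lt [SFinite μ] {F : X → ℝ≥0∞} (hF : Measurable F) :
    ∫⁻ s in Ioi (0 : ℝ), μ {x | ENNReal.ofReal s < F x} = ∫⁻ x, F x ∂μ := by
  simpa using lintegral_measure_le_ofReal_lt (μ := μ) (F := 0) measurable_zero hF

lemma measure_superlevel_add_of_ae_le {F V : X → ℝ≥0∞} {b : ℝ≥0} (hV : ∀ᵐ x ∂μ, V x ≤ b)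
    {s : ℝ} (hs : b ≤ s) :
    μ {x | ENNReal.ofReal s < F x + V x} ≤ μ {x | ENNReal.ofReal (s - b) < F x} := by
  refine measure_mono_ae ?_
  filter_upwards [hV] with x hx (h : ENNReal.ofReal s < F x + V x)
  refine lt_of_add_lt_add_right (a := (b : ℝ≥0∞)) ?_
  calc ENNReal.ofReal (s - b) + b = ENNReal.ofReal s := by
        rw [← ENNReal.ofReal_coe_nnreal, ← ENNReal.ofReal_add (sub_nonneg.2 hs) b.coe_nonneg,
          sub_add_cancel]
    _ < F x + b := h.trans_le (by gcongr)

lemma lorentzFunctional_add_le_of_bounded (hE : Monotone E) {C : ℝ≥0∞} (hC : ∀ a, E a ≤ C)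
    {F V : X → ℝ≥0∞} {b : ℝ≥0} (hV : ∀ᵐ x ∂μ, V x ≤ b) :
    lorentzFunctional E μ (fun x => F x + V x) ≤ b * C + lorentzFunctional E μ F := by
  rw [lorentzFunctional, ← Ioc_union_Ioi_eq_Ioi b.2, lintegral_union measurableSet_Ioi
    (disjoint_left.2 fun x hx hx' => not_lt_of_ge hx.2 hx')]
  gcongr ?_ + ?_
  · calc _ ≤ ∫⁻ _ in Ioc (0 : ℝ) b, C := lintegral_mono fun s => hC _
      _ = b * C := by simp [mul_comm]
  · calc _ ≤ ∫⁻ s in Ioi (b : ℝ), E (μ {x | ENNReal.ofReal (s - b) < F x}) :=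
          setLIntegral_mono' measurableSet_Ioi fun s hs =>
            hE (measure_superlevel_add_of_ae_le hV (le_of_lt hs))
      _ = lorentzFunctional E μ F := by
          rw [lorentzFunctional, ← lintegral_indicator measurableSet_Ioi,
            ← lintegral_indicator measurableSet_Ioi,
            ← lintegral_sub_right_eq_self ((Ioi (0 : ℝ)).indicator _) (b : ℝ)]
          congr with s
          simp [indicator, sub_pos]

lemma measure_superlevel_add {F : X → ℝ≥0∞} (hF : Measurable F) (V : X → ℝ≥0∞) (a : ℝ≥0∞) :
    μ {x | a < F x + V x} = μ {x | a < F x} + μ {x | F x ≤ a ∧ a < F x + V x} := by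
  have hm : MeasurableSet {x | a < F x} := measurableSet_lt measurable_const hF
  rw [← measure_inter_add_sdiff {x | a < F x + V x} hm]
  congr 2 <;> ext x
  · simpa using fun h : a < F x => h.trans_le le_self_add
  · simp [and_comm]

lemma lorentzFunctional_add_add_lorentzFunctional_min_le [SFinite μ] (hE : IsQuasiconcave E)
    {F V : X → ℝ≥0∞} (hF : Measurable F) (hV : Measurable V) {u : ℝ≥0∞} (hu : u ≠ 0)
    (hu' : u ≠ ∞) :
    lorentzFunctional E μ (fun x => F x + V x) + lorentzFunctional (fun a => E (min a u)) μ F ≤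
      lorentzFunctional E μ F + lorentzFunctional (fun a => E (min a u)) μ (fun x => F x + V x) +
        (∫⁻ x, V x ∂μ) * (E u / u) := by
  have hmin : Monotone fun a => E (min a u) :=
    fun _ _ hab => hE.monotone (min_le_min_right _ hab)
  have hmF := measurable_comp_measure_superlevel hE.monotone μ F
  have hmF' := measurable_comp_measure_superlevel hmin μ F
  have hmFV' := measurable_comp_measure_superlevel hmin μ (fun x => F x + V x)
  set d : ℝ → ℝ≥0∞ := fun s => μ {x | F x ≤ ENNReal.ofReal s ∧ ENNReal.ofReal s < F x + V x}
  have hd : ∫⁻ s in Ioi (0 : ℝ), d s ≤ ∫⁻ x, V x ∂μ :=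
    (lintegral_measure_le_ofReal_lt hF (hF.add hV)).trans_le
      (lintegral_mono fun x => tsub_le_iff_left.2 le_rfl)
  calc lorentzFunctional E μ (fun x => F x + V x) + lorentzFunctional (fun a => E (min a u)) μ F
      ≤ ∫⁻ s in Ioi (0 : ℝ), (E (μ {x | ENNReal.ofReal s < F x}) +
          E (min (μ {x | ENNReal.ofReal s < F x + V x}) u) + d s * (E u / u)) := by
        rw [lorentzFunctional, lorentzFunctional, ← lintegral_add_right _ hmF']
        refine lintegral_mono fun s => ?_
        simp_rw [measure_superlevel_add hF V]
        exact hE.map_add_add_map_min_le _ _ hu hu'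
    _ = lorentzFunctional E μ F + lorentzFunctional (fun a => E (min a u)) μ (fun x => F x + V x) +
          (∫⁻ s in Ioi (0 : ℝ), d s) * (E u / u) := by
        rw [lintegral_add_left (by exact hmF.add hmFV'), lintegral_add_left hmF,
          lintegral_mul_const' _ _ (ENNReal.div_ne_top (hE.map_ne_top u hu') hu)]
        rfl
    _ ≤ _ := by gcongr

/-- The terms truncated at the level `u` differ by at most `b * E u` because adding `V ≤ b` moves
levels by at most `b`. -/
lemma lorentzFunctional_add_le [SFinite μ] (hE : IsQuasiconcave E)
    {F V : X → ℝ≥0∞} (hF : Measurable F) (hV : Measurable V) {b : ℝ≥0}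
    {u : ℝ≥0∞} (hVb : ∀ᵐ x ∂μ, V x ≤ b) (hVu : ∫⁻ x, V x ∂μ ≤ b * u) :
    lorentzFunctional E μ (fun x => F x + V x) ≤ lorentzFunctional E μ F + 2 * b * E u := by
  obtain rfl | hu := eq_or_ne u 0
  · refine (lorentzFunctional_mono_ae hE.monotone ?_).trans le_self_add
    filter_upwards [(lintegral_eq_zero_iff hV).1 (by simpa using hVu)] with x hx
    simp [hx]
  obtain rfl | hu' := eq_or_ne u ∞
  · refine (lorentzFunctional_add_le_of_bounded hE.monotone
      (fun a => hE.monotone le_top) hVb).trans ?_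
    rw [add_comm, two_mul, add_mul, ← add_assoc]
    exact le_self_add
  by_cases hFtop : lorentzFunctional E μ F = ∞
  · simp [hFtop]
  set E' : ℝ≥0∞ → ℝ≥0∞ := fun a => E (min a u)
  have htop : lorentzFunctional E' μ F ≠ ∞ :=
    ne_top_of_le_ne_top hFtop (lintegral_mono fun s => hE.monotone (min_le_left _ _))
  have htrunc : lorentzFunctional E' μ (fun x => F x + V x) ≤ b * E u + lorentzFunctional E' μ F :=
    lorentzFunctional_add_le_of_bounded (fun _ _ hab => hE.monotone (min_le_min_right _ hab))
      (fun a => hE.monotone (min_le_right _ _)) hVb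
  have hmass : (∫⁻ x, V x ∂μ) * (E u / u) ≤ b * E u := by
    grw [hVu, mul_assoc, ENNReal.mul_div_cancel hu hu']
  refine (ENNReal.add_le_add_iff_right htop).1 ?_
  calc lorentzFunctional E μ (fun x => F x + V x) + lorentzFunctional E' μ F
      ≤ lorentzFunctional E μ F + lorentzFunctional E' μ (fun x => F x + V x) +
          (∫⁻ x, V x ∂μ) * (E u / u) :=
        lorentzFunctional_add_add_lorentzFunctional_min_le hE hF hV hu hu'
    _ ≤ lorentzFunctional E μ F + (b * E u + lorentzFunctional E' μ F) + b * E u := by gcongr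
    _ = lorentzFunctional E μ F + 2 * b * E u + lorentzFunctional E' μ F := by ring

lemma ae_ne_top_of_lorentzFunctional_ne_top (hE : IsQuasiconcave E) {F : X → ℝ≥0∞}
    (h : lorentzFunctional E μ F ≠ ∞) : ∀ᵐ x ∂μ, F x ≠ ∞ := by
  have hle : E (μ {x | ¬ F x ≠ ∞}) * ∞ ≤ lorentzFunctional E μ F := by
    calc E (μ {x | ¬ F x ≠ ∞}) * ∞ = ∫⁻ _ in Ioi (0 : ℝ), E (μ {x | ¬ F x ≠ ∞}) := by simp
      _ ≤ lorentzFunctional E μ F := by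
          refine lintegral_mono fun s => hE.monotone (measure_mono fun x hx => ?_)
          simp_all
  by_contra hne
  rw [ae_iff] at hne
  rw [ENNReal.mul_top (mt (hE.map_eq_zero _).1 hne)] at hle
  exact h (top_le_iff.1 hle)

lemma map_measure_mul_setLIntegral_le [SFinite μ] (hE : IsQuasiconcave E) {F : X → ℝ≥0∞}
    (hF : Measurable F) {S : Set X} (hS : μ S ≠ ∞) :
    E (μ S) * ∫⁻ x in S, F x ∂μ ≤ μ S * lorentzFunctional E μ F := by
  rw [← lintegral_measure_ofReal_lt hF, lorentzFunctional,
    ← lintegral_const_mul' _ _ (hE.map_ne_top _ hS), ← lintegral_const_mul' _ _ hS]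
  refine lintegral_mono fun s => ?_
  have hm : MeasurableSet {x | ENNReal.ofReal s < F x} := measurableSet_lt measurable_const hF
  calc E (μ S) * μ.restrict S {x | ENNReal.ofReal s < F x}
      ≤ μ S * E (μ.restrict S {x | ENNReal.ofReal s < F x}) := by
        rw [mul_comm]
        exact hE.mul_le_mul _ _ (by
          rw [Measure.restrict_apply hm]; exact measure_mono inter_subset_right)
    _ ≤ μ S * E (μ {x | ENNReal.ofReal s < F x}) := by
        gcongr
        exact hE.monotone (Measure.restrict_apply_le _ _)

lemma setLIntegral_ne_top_of_lorentzFunctional_ne_top [SFinite μ] (hE : IsQuasiconcave E)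
    {F : X → ℝ≥0∞} (hF : Measurable F) (h : lorentzFunctional E μ F ≠ ∞) {S : Set X}
    (hS : μ S ≠ ∞) : ∫⁻ x in S, F x ∂μ ≠ ∞ := by
  obtain hS0 | hS0 := eq_or_ne (μ S) 0
  · simp [Measure.restrict_eq_zero.2 hS0]
  intro htop
  have hle := map_measure_mul_setLIntegral_le hE hF hS
  rw [htop, ENNReal.mul_top (mt (hE.map_eq_zero _).1 hS0), top_le_iff] at hle
  exact ENNReal.mul_ne_top hS h hle

end LorentzFunctional

section Staircase

variable {X : Type*}

/-- The lower staircase with `n` steps of height `c` under `G`. -/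
noncomputable def staircase (c : ℝ≥0) (n : ℕ) (G : X → ℝ≥0∞) : X → ℝ≥0∞ :=
  fun x => ∑ i ∈ Finset.range n, {x | ((i + 1 : ℕ) : ℝ≥0∞) * c < G x}.indicator (fun _ => ↑c) x

lemma staircase_succ (c : ℝ≥0) (n : ℕ) (G : X → ℝ≥0∞) (x : X) :
    staircase c (n + 1) G x = staircase c n G x +
      {x | ((n + 1 : ℕ) : ℝ≥0∞) * c < G x}.indicator (fun _ => ↑c) x :=
  Finset.sum_range_succ _ n

lemma staircase_eq_of_lt {c : ℝ≥0} {n : ℕ} {G : X → ℝ≥0∞} {x : X} (h : n * c < G x) :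
    staircase c n G x = n * c := by
  have hstep : ∀ i ∈ Finset.range n,
      {x | ((i + 1 : ℕ) : ℝ≥0∞) * c < G x}.indicator (fun _ => (c : ℝ≥0∞)) x = c := by
    intro i hi
    refine indicator_of_mem (s := {x | ((i + 1 : ℕ) : ℝ≥0∞) * c < G x}) (lt_of_le_of_lt ?_ h) _
    gcongr
    exact Finset.mem_range.1 hi
  rw [staircase, Finset.sum_congr rfl hstep, Finset.sum_const, Finset.card_range, nsmul_eq_mul]

lemma staircase_le (c : ℝ≥0) (n : ℕ) (G : X → ℝ≥0∞) (x : X) : staircase c n G x ≤ G x := by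
  induction n with
  | zero => simp [staircase]
  | succ n ih =>
    by_cases h : ((n + 1 : ℕ) : ℝ≥0∞) * c < G x
    · exact (staircase_eq_of_lt h).trans_le h.le
    · rw [staircase_succ]
      simpa only [indicator, mem_ofPred_eq, h, if_false, add_zero] using ih

lemma min_le_staircase_add (c : ℝ≥0) (n : ℕ) (G : X → ℝ≥0∞) (x : X) :
    min (G x) (n * c) ≤ staircase c n G x + c := by
  induction n with
  | zero => simp
  | succ n ih =>
    have hle : staircase c n G x ≤ staircase c (n + 1) G x := by
      rw [staircase_succ]
      exact le_self_add
    rcases le_or_gt (G x) (n * c) with h | h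
    · rw [min_eq_left h] at ih
      exact (min_le_left _ _).trans (ih.trans (by gcongr))
    · calc min (G x) ((n + 1 : ℕ) * c) ≤ (n + 1 : ℕ) * c := min_le_right _ _
        _ = staircase c n G x + c := by
          rw [staircase_eq_of_lt h, Nat.cast_succ, add_mul, one_mul]
        _ ≤ staircase c (n + 1) G x + c := by gcongr

lemma tendsto_staircase (G : X → ℝ≥0∞) (x : X) :
    Tendsto (fun j : ℕ => staircase (j + 1 : ℝ≥0)⁻¹ ((j + 1) * (j + 1)) G x) atTop (𝓝 (G x)) := by
  have hheight (j : ℕ) : (((j + 1) * (j + 1) : ℕ) : ℝ≥0∞) * ((j + 1 : ℝ≥0)⁻¹ : ℝ≥0) =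
      ((j + 1 : ℕ) : ℝ≥0∞) := by
    norm_cast
    push_cast
    field_simp
  have htop : Tendsto (fun j : ℕ => ((j + 1 : ℕ) : ℝ≥0∞)) atTop (𝓝 ∞) :=
    ENNReal.tendsto_nat_nhds_top.comp (tendsto_add_atTop_nat 1)
  have hstep : Tendsto (fun j : ℕ => (((j + 1 : ℝ≥0)⁻¹ : ℝ≥0) : ℝ≥0∞)) atTop (𝓝 0) := by
    have := (ENNReal.tendsto_inv_nat_nhds_zero).comp (tendsto_add_atTop_nat 1)
    refine this.congr fun j => ?_
    simp [ENNReal.coe_inv]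
  have hlower := ENNReal.Tendsto.sub ((tendsto_const_nhds (x := G x)).min htop) hstep
    (Or.inr ENNReal.zero_ne_top)
  rw [min_eq_left le_top, tsub_zero] at hlower
  refine tendsto_of_tendsto_of_tendsto_of_le_of_le hlower tendsto_const_nhds (fun j => ?_)
    (fun j => staircase_le _ _ G x)
  rw [← hheight]
  exact tsub_le_iff_right.2 (min_le_staircase_add _ _ G x)

variable [MeasurableSpace X]

lemma measurable_staircase {G : X → ℝ≥0∞} (hG : Measurable G) (c : ℝ≥0) (n : ℕ) :
    Measurable (staircase c n G) :=
  Finset.measurable_fun_sum _ fun _ _ =>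
    measurable_const.indicator (measurableSet_lt measurable_const hG)

lemma sum_mul_measure_superlevel_le {E : ℝ≥0∞ → ℝ≥0∞} (hE : Monotone E) (μ : Measure X)
    (G : X → ℝ≥0∞) (c : ℝ≥0) (n : ℕ) :
    ∑ i ∈ Finset.range n, c * E (μ {x | ((i + 1 : ℕ) : ℝ≥0∞) * c < G x}) ≤
      ∫⁻ s in Ioc (0 : ℝ) (n * c), E (μ {x | ENNReal.ofReal s < G x}) := by
  induction n with
  | zero => simp
  | succ n ih =>
    have hn : (n : ℝ) * c ≤ (n + 1 : ℕ) * c := by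
      gcongr
      simp
    rw [← Ioc_union_Ioc_eq_Ioc (by positivity : 0 ≤ (n : ℝ) * c) hn,
      lintegral_union measurableSet_Ioc
        (disjoint_left.2 fun x hx hx' => not_lt_of_ge hx.2 hx'.1), Finset.sum_range_succ]
    gcongr ?_ + ?_
    have hlength : volume (Ioc ((n : ℝ) * c) ((n + 1 : ℕ) * c)) = c := by
      rw [Real.volume_Ioc, Nat.cast_succ, add_mul, one_mul, add_sub_cancel_left,
        ENNReal.ofReal_coe_nnreal]
    calc c * E (μ {x | ((n + 1 : ℕ) : ℝ≥0∞) * c < G x})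
        = ∫⁻ _ in Ioc ((n : ℝ) * c) ((n + 1 : ℕ) * c),
            E (μ {x | ((n + 1 : ℕ) : ℝ≥0∞) * c < G x}) := by
          rw [setLIntegral_const, hlength, mul_comm]
      _ ≤ _ := by
          refine setLIntegral_mono' measurableSet_Ioc fun s hs => hE (measure_mono fun x hx => ?_)
          refine (ENNReal.ofReal_le_ofReal hs.2).trans_lt (lt_of_eq_of_lt ?_ hx)
          rw [ENNReal.ofReal_mul (by positivity), ENNReal.ofReal_natCast,
            ENNReal.ofReal_coe_nnreal]

end Staircase

section BoundedKernel

variable {X : Type*} [MeasurableSpace X] {μ : Measure X} {κ : Kernel X X} {b : ℝ≥0}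

lemma lintegral_kernel_one {G : X → ℝ≥0∞} (hG : Measurable G) (x : X) :
    ∫⁻ y, G y ∂(1 : Kernel X X) x = G x :=
  Kernel.lintegral_id' hG x

lemma lintegral_kernel_pow_succ (κ : Kernel X X) (n : ℕ) {G : X → ℝ≥0∞} (hG : Measurable G)
    (x : X) : ∫⁻ y, G y ∂(κ ^ (n + 1)) x = ∫⁻ y, ∫⁻ z, G z ∂(κ ^ n) y ∂κ x := by
  rw [pow_succ]
  exact Kernel.lintegral_comp _ _ _ hG

/-- The operator `G ↦ ∫ G dκ(x)` induced by the kernel `κ` on nonnegative functions has norm at most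
`b` both on `L^∞(μ)` and on `L¹(μ)`. -/
structure IsBoundedKernel (κ : Kernel X X) (μ : Measure X) (b : ℝ≥0) : Prop where
  ae_apply_univ_le : ∀ᵐ x ∂μ, κ x univ ≤ b
  lintegral_lintegral_le : ∀ G : X → ℝ≥0∞, Measurable G →
    ∫⁻ x, ∫⁻ y, G y ∂κ x ∂μ ≤ b * ∫⁻ x, G x ∂μ

namespace IsBoundedKernel

lemma ae_ae (h : IsBoundedKernel κ μ b) {p : X → Prop} (hp : ∀ᵐ x ∂μ, p x) :
    ∀ᵐ x ∂μ, ∀ᵐ y ∂κ x, p y := by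
  obtain ⟨N, hpN, hN, hN0⟩ := exists_measurable_superset_of_null (ae_iff.1 hp)
  have hint : ∫⁻ x, κ x N ∂μ = 0 := by
    simpa [lintegral_indicator_one hN, hN0] using
      h.lintegral_lintegral_le (N.indicator 1) (measurable_one.indicator hN)
  filter_upwards [(lintegral_eq_zero_iff (κ.measurable_coe hN)).1 hint] with x hx
  exact measure_mono_null hpN hx

lemma ae_lintegral_le (h : IsBoundedKernel κ μ b) {G : X → ℝ≥0∞} {c : ℝ≥0∞}
    (hG : ∀ᵐ x ∂μ, G x ≤ c) : ∀ᵐ x ∂μ, ∫⁻ y, G y ∂κ x ≤ b * c := by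
  filter_upwards [h.ae_ae hG, h.ae_apply_univ_le] with x hx hb
  calc ∫⁻ y, G y ∂κ x ≤ ∫⁻ _, c ∂κ x := lintegral_mono_ae hx
    _ = c * κ x univ := lintegral_const c
    _ ≤ b * c := by rw [mul_comm]; gcongr

protected lemma pow (h : IsBoundedKernel κ μ b) (n : ℕ) : IsBoundedKernel (κ ^ n) μ (b ^ n) := by
  induction n with
  | zero =>
    constructor
    · exact Eventually.of_forall fun x => by
        simpa using (lintegral_kernel_one (measurable_one (α := ℝ≥0∞)) x).le
    · exact fun G hG => by simp [lintegral_kernel_one hG]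
  | succ n ih =>
    constructor
    · filter_upwards [h.ae_lintegral_le ih.ae_apply_univ_le] with x hx
      have := lintegral_kernel_pow_succ κ n (measurable_one (α := ℝ≥0∞)) x
      simp only [Pi.one_apply, lintegral_one] at this
      rwa [this, pow_succ', ENNReal.coe_mul]
    · intro G hG
      calc ∫⁻ x, ∫⁻ y, G y ∂(κ ^ (n + 1)) x ∂μ
          = ∫⁻ x, ∫⁻ y, ∫⁻ z, G z ∂(κ ^ n) y ∂κ x ∂μ := by
            simp_rw [lintegral_kernel_pow_succ κ n hG]
        _ ≤ b * ((b ^ n : ℝ≥0) * ∫⁻ x, G x ∂μ) :=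
            (h.lintegral_lintegral_le _ hG.lintegral_kernel).trans
              (by gcongr; exact ih.lintegral_lintegral_le G hG)
        _ = (b ^ (n + 1) : ℝ≥0) * ∫⁻ x, G x ∂μ := by rw [pow_succ', ENNReal.coe_mul, mul_assoc]

end IsBoundedKernel

lemma tendsto_lintegral_of_tendsto_of_le {F : ℕ → X → ℝ≥0∞} {G : X → ℝ≥0∞}
    (hF : ∀ j, Measurable (F j)) (hle : ∀ j x, F j x ≤ G x)
    (h : ∀ x, Tendsto (fun j => F j x) atTop (𝓝 (G x))) :
    Tendsto (fun j => ∫⁻ x, F j x ∂μ) atTop (𝓝 (∫⁻ x, G x ∂μ)) := by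
  refine tendsto_of_le_liminf_of_limsup_le ?_ (limsup_le_of_le (by isBoundedDefault)
    (Eventually.of_forall fun j => lintegral_mono (hle j)))
  calc ∫⁻ x, G x ∂μ = ∫⁻ x, liminf (fun j => F j x) atTop ∂μ :=
        lintegral_congr fun x => (h x).liminf_eq.symm
    _ ≤ _ := lintegral_liminf_le hF

variable [SFinite μ] {E : ℝ≥0∞ → ℝ≥0∞} {F G : X → ℝ≥0∞}

lemma lorentzFunctional_add_lintegral_staircase_le (hE : IsQuasiconcave E)
    (hκ : IsBoundedKernel κ μ b) (hF : Measurable F) (hG : Measurable G) (c : ℝ≥0) (n : ℕ) :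
    lorentzFunctional E μ (fun x => F x + ∫⁻ y, staircase c n G y ∂κ x) ≤
      lorentzFunctional E μ F +
        2 * b * ∑ i ∈ Finset.range n, c * E (μ {x | ((i + 1 : ℕ) : ℝ≥0∞) * c < G x}) := by
  induction n with
  | zero => simp [staircase]
  | succ n ih =>
    set B := {x | ((n + 1 : ℕ) : ℝ≥0∞) * c < G x}
    have hB : MeasurableSet B := measurableSet_lt measurable_const hG
    set V : X → ℝ≥0∞ := B.indicator fun _ => c
    have hV : Measurable V := measurable_const.indicator hB
    have hVc : ∀ᵐ x ∂μ, V x ≤ c := Eventually.of_forall (indicator_le_self' (by simp))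
    have hint : ∫⁻ x, ∫⁻ y, V y ∂κ x ∂μ ≤ (b * c : ℝ≥0) * μ B := by
      refine (hκ.lintegral_lintegral_le V hV).trans_eq ?_
      rw [lintegral_indicator_const hB, ENNReal.coe_mul, mul_assoc]
    have hS := measurable_staircase hG c n
    simp_rw [staircase_succ, lintegral_add_left hS, ← add_assoc]
    calc _ ≤ lorentzFunctional E μ (fun x => F x + ∫⁻ y, staircase c n G y ∂κ x) +
          2 * (b * c : ℝ≥0) * E (μ B) :=
          lorentzFunctional_add_le hE (hF.add hS.lintegral_kernel) hV.lintegral_kernel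
            (by simpa using hκ.ae_lintegral_le hVc) hint
      _ ≤ _ := by
          grw [ih]
          rw [Finset.sum_range_succ, ENNReal.coe_mul]
          exact le_of_eq (by ring)

lemma lorentzFunctional_add_lintegral_le (hE : IsQuasiconcave E) (hκ : IsBoundedKernel κ μ b)
    (hF : Measurable F) (hG : Measurable G) :
    lorentzFunctional E μ (fun x => F x + ∫⁻ y, G y ∂κ x) ≤
      lorentzFunctional E μ F + 2 * b * lorentzFunctional E μ G := by
  refine lorentzFunctional_le_of_tendsto hE
    (fun j => hF.add (measurable_staircase hG _ _).lintegral_kernel)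
    (fun x => tendsto_const_nhds.add <| tendsto_lintegral_of_tendsto_of_le
      (fun j => measurable_staircase hG _ _) (fun j => staircase_le _ _ G) (tendsto_staircase G))
    fun j => (lorentzFunctional_add_lintegral_staircase_le hE hκ hF hG _ _).trans ?_
  gcongr
  exact (sum_mul_measure_superlevel_le hE.monotone μ G _ _).trans
    (lintegral_mono_set Ioc_subset_Ioi_self)

lemma lorentzFunctional_sum_lintegral_pow_le (hE : IsQuasiconcave E)
    (hκ : IsBoundedKernel κ μ b) (hG : Measurable G) (m M : ℕ) :
    lorentzFunctional E μ (fun x => ∑ i ∈ Finset.range M, ∫⁻ y, G y ∂(κ ^ (i + m)) x) ≤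
      (∑ i ∈ Finset.range M, (2 * b : ℝ≥0∞) ^ (i + m)) * lorentzFunctional E μ G := by
  induction M with
  | zero => simp [lorentzFunctional_zero ((hE.map_eq_zero 0).2 rfl)]
  | succ M ih =>
    simp_rw [Finset.sum_range_succ, add_mul]
    obtain h0 | h0 := eq_or_ne (M + m) 0
    · obtain ⟨rfl, rfl⟩ := Nat.add_eq_zero_iff.1 h0
      simp [lintegral_kernel_one hG]
    · refine (lorentzFunctional_add_lintegral_le hE (hκ.pow (M + m))
        (Finset.measurable_fun_sum _ fun i _ => hG.lintegral_kernel) hG).trans ?_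
      rw [mul_pow, ENNReal.coe_pow]
      gcongr
      exact le_self_pow₀ one_le_two h0

lemma lorentzFunctional_tsum_lintegral_pow_le (hE : IsQuasiconcave E)
    (hκ : IsBoundedKernel κ μ b) (hG : Measurable G) (m : ℕ) :
    lorentzFunctional E μ (fun x => ∑' i, ∫⁻ y, G y ∂(κ ^ (i + m)) x) ≤
      (2 * b) ^ m * (1 - 2 * (b : ℝ≥0∞))⁻¹ * lorentzFunctional E μ G := by
  refine lorentzFunctional_le_of_tendsto hE
    (F := fun M x => ∑ i ∈ Finset.range M, ∫⁻ y, G y ∂(κ ^ (i + m)) x)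
    (fun M => Finset.measurable_fun_sum _ fun i _ => hG.lintegral_kernel)
    (fun x => ENNReal.summable.hasSum.tendsto_sum_nat) fun M => ?_
  refine (lorentzFunctional_sum_lintegral_pow_le hE hκ hG m M).trans ?_
  gcongr
  calc ∑ i ∈ Finset.range M, (2 * b : ℝ≥0∞) ^ (i + m)
      ≤ ∑' i : ℕ, (2 * b : ℝ≥0∞) ^ (i + m) := ENNReal.sum_le_tsum _
    _ = (2 * b) ^ m * (1 - 2 * (b : ℝ≥0∞))⁻¹ := by
      simp_rw [pow_add, ENNReal.tsum_mul_right, ENNReal.tsum_geometric, mul_comm]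

end BoundedKernel

section YoungFunction

variable {ψ τ σ : ℝ → ℝ}

lemma strictMonoOn_of_eq_one_div (hψ : StrictMonoOn ψ (Ici 0)) (hψ0 : ψ 0 = 0) (hτ0 : τ 0 = 0)
    (hτ : ∀ t, 0 < t → τ t = 1 / ψ (1 / t)) : StrictMonoOn τ (Ici 0) := by
  have hψpos : ∀ t, 0 < t → 0 < ψ t := fun t ht =>
    hψ0 ▸ hψ (mem_Ici.2 le_rfl) (mem_Ici.2 ht.le) ht
  intro s hs t _ hst
  obtain rfl | hs := (mem_Ici.1 hs).eq_or_lt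
  · rw [hτ0, hτ t hst]
    exact one_div_pos.2 (hψpos _ (one_div_pos.2 hst))
  · have ht := hs.trans hst
    rw [hτ s hs, hτ t ht]
    refine one_div_lt_one_div_of_lt (hψpos _ (one_div_pos.2 ht)) ?_
    exact hψ (one_div_pos.2 ht).le (one_div_pos.2 hs).le (one_div_lt_one_div_of_lt hs hst)

lemma mul_le_mul_of_convexOn_of_map_zero (hψ : ConvexOn ℝ (Ici 0) ψ) (hψ0 : ψ 0 = 0) {s t : ℝ}
    (hs : 0 ≤ s) (hst : s ≤ t) : t * ψ s ≤ s * ψ t := by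
  obtain rfl | ht := (hs.trans hst).eq_or_lt
  · simp [le_antisymm hst hs, hψ0]
  have h := hψ.2 (mem_Ici.2 ht.le) (mem_Ici.2 le_rfl) (div_nonneg hs ht.le)
    (sub_nonneg.2 (div_le_one_of_le₀ hst ht.le)) (add_sub_cancel _ _)
  simp only [smul_eq_mul, mul_zero, add_zero, hψ0, div_mul_cancel₀ _ ht.ne'] at h
  rwa [div_mul_eq_mul_div, le_div_iff₀ ht, mul_comm] at h

lemma mul_le_mul_of_eq_one_div (hψ : StrictMonoOn ψ (Ici 0)) (hconv : ConvexOn ℝ (Ici 0) ψ)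
    (hψ0 : ψ 0 = 0) (hτ0 : τ 0 = 0) (hτ : ∀ t, 0 < t → τ t = 1 / ψ (1 / t)) {s t : ℝ}
    (hs : 0 ≤ s) (hst : s ≤ t) : t * τ s ≤ s * τ t := by
  obtain rfl | hs := hs.eq_or_lt
  · simp [hτ0]
  have ht := hs.trans_le hst
  have hψpos : ∀ r, 0 < r → 0 < ψ (1 / r) := fun r hr =>
    hψ0 ▸ hψ (mem_Ici.2 le_rfl) (mem_Ici.2 (one_div_pos.2 hr).le) (one_div_pos.2 hr)
  have h := mul_le_mul_of_convexOn_of_map_zero hconv hψ0 (one_div_pos.2 ht).le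
    (one_div_le_one_div_of_le hs hst)
  rw [hτ s hs, hτ t ht, mul_one_div, mul_one_div, div_le_div_iff₀ (hψpos s hs) (hψpos t ht)]
  rwa [one_div_mul_eq_div, one_div_mul_eq_div, div_le_div_iff₀ hs ht, mul_comm,
    mul_comm (ψ _) s] at h

lemma extInv_top : extInv σ ∞ = ∞ := if_pos rfl

lemma extInv_of_ne_top {a : ℝ≥0∞} (ha : a ≠ ∞) : extInv σ a = ENNReal.ofReal (σ a.toReal) :=
  if_neg ha

lemma monotone_extInv (hσ : MonotoneOn σ (Ici 0)) : Monotone (extInv σ) := fun a b hab => by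
  obtain rfl | hb := eq_or_ne b ∞
  · exact le_top.trans_eq extInv_top.symm
  rw [extInv_of_ne_top (ne_top_of_le_ne_top hb hab), extInv_of_ne_top hb]
  exact ENNReal.ofReal_le_ofReal
    (hσ ENNReal.toReal_nonneg ENNReal.toReal_nonneg (ENNReal.toReal_mono hb hab))

lemma surjective_extInv (hτ : MapsTo τ (Ici 0) (Ici 0)) (hσ : LeftInvOn σ τ (Ici 0)) :
    Function.Surjective (extInv σ) := fun y => by
  obtain rfl | hy := eq_or_ne y ∞
  · exact ⟨∞, extInv_top⟩
  refine ⟨ENNReal.ofReal (τ y.toReal), ?_⟩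
  rw [extInv_of_ne_top ENNReal.ofReal_ne_top, ENNReal.toReal_ofReal (hτ ENNReal.toReal_nonneg),
    hσ ENNReal.toReal_nonneg, ENNReal.ofReal_toReal hy]

lemma mul_extInv_le_mul (hσ : ∀ a b, 0 ≤ a → a ≤ b → a * σ b ≤ b * σ a)
    (hpos : ∀ a, 0 < a → 0 < σ a) {a b : ℝ≥0∞} (hab : a ≤ b) :
    a * extInv σ b ≤ b * extInv σ a := by
  obtain rfl | ha0 := eq_or_ne a 0
  · simp
  obtain rfl | ha := eq_or_ne a ∞
  · simp [top_le_iff.1 hab]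
  rw [extInv_of_ne_top ha]
  obtain rfl | hb := eq_or_ne b ∞
  · rw [ENNReal.top_mul (ENNReal.ofReal_pos.2 (hpos _ (ENNReal.toReal_pos ha0 ha))).ne']
    exact le_top
  have h := ENNReal.ofReal_le_ofReal
    (hσ a.toReal b.toReal ENNReal.toReal_nonneg (ENNReal.toReal_mono hb hab))
  rwa [ENNReal.ofReal_mul ENNReal.toReal_nonneg, ENNReal.ofReal_mul ENNReal.toReal_nonneg,
    ENNReal.ofReal_toReal ha, ENNReal.ofReal_toReal hb, ← extInv_of_ne_top hb] at h

lemma isQuasiconcave_extInv_of_invOn (hτ : StrictMonoOn τ (Ici 0)) (hτ0 : τ 0 = 0)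
    (hstar : ∀ s t, 0 ≤ s → s ≤ t → t * τ s ≤ s * τ t) (hmaps : MapsTo σ (Ici 0) (Ici 0))
    (hinv : InvOn σ τ (Ici 0) (Ici 0)) : IsQuasiconcave (extInv σ) := by
  have hτmaps : MapsTo τ (Ici 0) (Ici 0) := fun t ht =>
    hτ0.symm.trans_le (hτ.monotoneOn self_mem_Ici ht ht)
  have hσ : MonotoneOn σ (Ici 0) := fun a ha b hb hab => by
    rwa [← hτ.le_iff_le (hmaps ha) (hmaps hb), hinv.2 ha, hinv.2 hb]
  have hσ0 : σ 0 = 0 := by simpa [hτ0] using hinv.1 (self_mem_Ici (a := (0 : ℝ)))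
  have hσpos : ∀ a, 0 < a → 0 < σ a := fun a ha => by
    refine (mem_Ici.1 (hmaps ha.le)).lt_of_ne fun h => ha.ne ?_
    rw [← hinv.2 ha.le, ← h, hτ0]
  refine ⟨monotone_extInv hσ, fun a => ⟨fun h => ?_, ?_⟩, fun a ha => ?_, fun a b hab => ?_, ?_⟩
  · obtain rfl | ha := eq_or_ne a ∞
    · exact absurd h (by simp [extInv_top])
    · by_contra ha0
      rw [extInv_of_ne_top ha, ENNReal.ofReal_eq_zero] at h
      exact h.not_gt (hσpos _ (ENNReal.toReal_pos ha0 ha))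
  · rintro rfl
    simp [extInv_of_ne_top, hσ0]
  · simp [extInv_of_ne_top ha]
  · refine mul_extInv_le_mul (fun a b ha hab => ?_) hσpos hab
    have h := hstar (σ a) (σ b) (hmaps ha) (hσ ha (ha.trans hab) hab)
    rw [hinv.2 ha, hinv.2 (ha.trans hab)] at h
    linarith
  · exact ((monotone_extInv hσ).continuous_of_surjective
      (surjective_extInv hτmaps hinv.1)).lowerSemicontinuous

lemma isQuasiconcave_extInv (hconv : ConvexOn ℝ (Ici 0) ψ) (hψ : StrictMonoOn ψ (Ici 0))
    (hψ0 : ψ 0 = 0) (hτ0 : τ 0 = 0) (hτ : ∀ t, 0 < t → τ t = 1 / ψ (1 / t))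
    (hmaps : MapsTo σ (Ici 0) (Ici 0)) (hinv : InvOn σ τ (Ici 0) (Ici 0)) :
    IsQuasiconcave (extInv σ) :=
  isQuasiconcave_extInv_of_invOn (strictMonoOn_of_eq_one_div hψ hψ0 hτ0 hτ) hτ0
    (fun _ _ => mul_le_mul_of_eq_one_div hψ hconv hψ0 hτ0 hτ) hmaps hinv

end YoungFunction

section MostSlopes

variable {E F : Type*} [NormedAddCommGroup E] [MeasurableSpace E] [PseudoMetricSpace F]
  {μ : Measure E} {f : E → F} {C : ℝ≥0} {x y : E} {r : ℝ}

/-- The exceptional set of points of the ball of radius `r` about `x` at which the slope of `f`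
from `x` exceeds `C` has less than half the measure of a ball of radius `r / 2`. This is the
quantitative form of approximate differentiability which makes `f` Lipschitz on countably many
pieces. -/
def HasMostSlopesLE (μ : Measure E) (f : E → F) (C : ℝ≥0) (x : E) (r : ℝ) : Prop :=
  μ (Metric.closedBall x r \ {y | dist (f y) (f x) ≤ C * dist y x}) <
    μ (Metric.closedBall x (r / 2)) / 2

variable [NormedSpace ℝ E] [BorelSpace E] [μ.IsAddHaarMeasure]

lemma HasMostSlopesLE.exists_mem_closedBall_midpoint (hx : HasMostSlopesLE μ f C x (dist x y))
    (hy : HasMostSlopesLE μ f C y (dist x y)) :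
    ∃ z ∈ Metric.closedBall (midpoint ℝ x y) (dist x y / 2),
      dist (f z) (f x) ≤ C * dist z x ∧ dist (f z) (f y) ≤ C * dist z y := by
  set B := Metric.closedBall (midpoint ℝ x y) (dist x y / 2)
  have hBx : B ⊆ Metric.closedBall x (dist x y) := Metric.closedBall_subset_closedBall' (by
    rw [dist_midpoint_left, Real.norm_ofNat]
    linarith)
  have hBy : B ⊆ Metric.closedBall y (dist x y) := Metric.closedBall_subset_closedBall' (by
    rw [dist_midpoint_right, Real.norm_ofNat]
    linarith)
  have hhalf : ∀ z, μ (Metric.closedBall z (dist x y / 2)) = μ B := fun z =>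
    (Measure.addHaar_closedBall_center μ z _).trans (Measure.addHaar_closedBall_center μ _ _).symm
  rw [HasMostSlopesLE, hhalf] at hx hy
  by_contra! hcon
  have hsub : B ⊆ (Metric.closedBall x (dist x y) \ {z | dist (f z) (f x) ≤ C * dist z x}) ∪
      (Metric.closedBall y (dist x y) \ {z | dist (f z) (f y) ≤ C * dist z y}) := fun z hz => by
    by_cases h : dist (f z) (f x) ≤ C * dist z x
    · exact Or.inr ⟨hBy hz, not_le.2 (hcon z hz h)⟩
    · exact Or.inl ⟨hBx hz, h⟩
  have hlt := ((measure_mono hsub).trans (measure_union_le _ _)).trans_lt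
    (ENNReal.add_lt_add hx hy)
  rw [ENNReal.add_halves] at hlt
  exact lt_irrefl _ hlt

lemma HasMostSlopesLE.dist_le (hx : HasMostSlopesLE μ f C x (dist x y))
    (hy : HasMostSlopesLE μ f C y (dist x y)) : dist (f x) (f y) ≤ 2 * C * dist x y := by
  obtain ⟨z, hz, hzx, hzy⟩ := hx.exists_mem_closedBall_midpoint hy
  have hdx : dist z x ≤ dist x y := by
    have := dist_triangle z (midpoint ℝ x y) x
    rw [dist_midpoint_left, Real.norm_ofNat] at this
    linarith [Metric.mem_closedBall.1 hz]
  have hdy : dist z y ≤ dist x y := by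
    have := dist_triangle z (midpoint ℝ x y) y
    rw [dist_midpoint_right, Real.norm_ofNat] at this
    linarith [Metric.mem_closedBall.1 hz]
  calc dist (f x) (f y) ≤ dist (f z) (f x) + dist (f z) (f y) := dist_triangle_left _ _ _
    _ ≤ C * dist x y + C * dist x y := by
      gcongr
      · exact hzx.trans (by gcongr)
      · exact hzy.trans (by gcongr)
    _ = 2 * C * dist x y := by ring

lemma lipschitzOnWith_of_hasMostSlopesLE (μ : Measure E) [μ.IsAddHaarMeasure] {δ : ℝ} (q : E) :
    LipschitzOnWith (2 * C) f
      ({x | ∀ r ∈ Ioo 0 δ, HasMostSlopesLE μ f C x r} ∩ Metric.ball q (δ / 2)) := by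
  refine LipschitzOnWith.of_dist_le_mul fun x ⟨hx, hxq⟩ y ⟨hy, hyq⟩ => ?_
  rcases (dist_nonneg (x := x) (y := y)).eq_or_lt with h0 | h0
  · simp [eq_of_dist_eq_zero h0.symm]
  · have hδ : dist x y < δ := by
      linarith [dist_triangle_right x y q, Metric.mem_ball.1 hxq, Metric.mem_ball.1 hyq]
    exact_mod_cast (hx _ ⟨h0, hδ⟩).dist_le (hy _ ⟨h0, hδ⟩)

lemma exists_lipschitz_cover_of_hasMostSlopesLE [FiniteDimensional ℝ E] {F : Type*}
    [NormedAddCommGroup F] [NormedSpace ℝ F] [FiniteDimensional ℝ F] (μ : Measure E)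
    [μ.IsAddHaarMeasure] (f : E → F) :
    ∃ u : ℕ → E → F, (∀ j, ∃ C, LipschitzWith C (u j)) ∧
      ∀ x, (∃ j : ℕ, ∀ r ∈ Ioo (0 : ℝ) (1 / (j + 1)), HasMostSlopesLE μ f j x r) →
        ∃ j, f x = u j x := by
  have := FiniteDimensional.proper ℝ E
  choose u hu hfu using fun p : ℕ => (lipschitzOnWith_of_hasMostSlopesLE (f := f)
    (C := p.unpair.1) μ (δ := 1 / (p.unpair.1 + 1))
    (TopologicalSpace.denseSeq E p.unpair.2)).extend_finite_dimension
  refine ⟨u, fun p => ⟨_, hu p⟩, fun x ⟨j, hj⟩ => ?_⟩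
  obtain ⟨i, hi⟩ := (TopologicalSpace.denseRange_denseSeq E).exists_dist_lt x
    (ε := 1 / ((j : ℝ) + 1) / 2) (by positivity)
  refine ⟨Nat.pair j i, hfu _ ?_⟩
  rw [Nat.unpair_pair]
  exact ⟨hj, hi⟩

end MostSlopes

section DensityPoints

variable {k : ℕ} {S T Ω : Set (EuclideanSpace ℝ (Fin k))}
  {f u : EuclideanSpace ℝ (Fin k) → EuclideanSpace ℝ (Fin k)}
  {A : EuclideanSpace ℝ (Fin k) →L[ℝ] EuclideanSpace ℝ (Fin k)} {x : EuclideanSpace ℝ (Fin k)}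

lemma not_isDensityPt_empty : ¬ IsDensityPt ∅ x := fun h => by
  simp only [IsDensityPt, empty_inter, measure_empty, ENNReal.zero_div] at h
  exact zero_ne_one (tendsto_nhds_unique tendsto_const_nhds h)

lemma HasApproxDerivAt.nontrivial (h : HasApproxDerivAt Ω f A x) :
    Nontrivial (EuclideanSpace ℝ (Fin k)) := by
  by_contra hsub
  rw [not_nontrivial_iff_subsingleton] at hsub
  refine not_isDensityPt_empty (x := x) ?_
  convert h 1 one_pos
  exact (eq_empty_of_forall_notMem fun y hy => hy.1.2 (Subsingleton.elim y x)).symm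

lemma IsDensityPt.of_eventually_mem [Nontrivial (EuclideanSpace ℝ (Fin k))]
    (hS : IsDensityPt S x) (hST : ∀ᶠ y in 𝓝[≠] x, y ∈ S → y ∈ T) : IsDensityPt T x := by
  obtain ⟨δ, hδ, hδST⟩ := Metric.mem_nhdsWithin_iff.1 hST
  refine tendsto_of_tendsto_of_tendsto_of_le_of_le' hS tendsto_const_nhds ?_
    (Eventually.of_forall fun r => ?_)
  · filter_upwards [Ioo_mem_nhdsGT hδ] with r hr
    gcongr ?_ / _
    rw [← measure_sdiff_null (measure_singleton x)]
    refine measure_mono fun y hy => ⟨hδST ⟨?_, hy.2⟩ hy.1.1, hy.1.2⟩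
    exact Metric.closedBall_subset_ball hr.2 hy.1.2
  · exact ENNReal.div_le_of_le_mul (by rw [one_mul]; exact measure_mono inter_subset_right)

lemma IsDensityPt.eventually_volume_closedBall_sdiff_lt (hd : IsDensityPt S x)
    (hS : MeasurableSet S) {δ : ℝ≥0∞} (hδ : δ ≠ 0) :
    ∀ᶠ r in 𝓝[>] 0, volume (Metric.closedBall x r \ S) < δ * volume (Metric.closedBall x r) := by
  have hlt : 1 - δ < 1 := ENNReal.sub_lt_self ENNReal.one_ne_top one_ne_zero hδ
  filter_upwards [hd.eventually_const_lt hlt, self_mem_nhdsWithin] with r hr hr0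
  have hB0 : volume (Metric.closedBall x r) ≠ 0 := (Metric.measure_closedBall_pos _ _ hr0).ne'
  have hBt : volume (Metric.closedBall x r) ≠ ∞ := measure_closedBall_lt_top.ne
  rw [ENNReal.lt_div_iff_mul_lt (Or.inl hB0) (Or.inl hBt)] at hr
  by_contra! hcon
  refine lt_irrefl (volume (Metric.closedBall x r)) ?_
  calc volume (Metric.closedBall x r)
      ≤ (1 - δ) * volume (Metric.closedBall x r) + δ * volume (Metric.closedBall x r) := by
        rw [← add_mul]
        exact le_mul_of_one_le_left' le_tsub_add
    _ < volume (S ∩ Metric.closedBall x r) + volume (Metric.closedBall x r \ S) :=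
        ENNReal.add_lt_add_of_lt_of_le (ne_top_of_le_ne_top
          (ne_top_of_le_ne_top hBt (measure_mono sdiff_subset)) hcon) hr hcon
    _ = volume (Metric.closedBall x r) := by rw [inter_comm, measure_inter_add_sdiff _ hS]

lemma HasApproxDerivAt.isDensityPt_dist_le (h : HasApproxDerivAt Ω f A x) :
    IsDensityPt {y | dist (f y) (f x) ≤ (‖A‖ + 1) * dist y x} x := by
  have := h.nontrivial
  refine (h 1 one_pos).of_eventually_mem (Eventually.of_forall fun y ⟨⟨_, hyx⟩, hy⟩ => ?_)
  have hpos : 0 < ‖y - x‖ := norm_pos_iff.2 (sub_ne_zero.2 hyx)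
  rw [div_lt_one hpos] at hy
  rw [mem_ofPred_eq, dist_eq_norm, dist_eq_norm]
  calc ‖f y - f x‖ = ‖(f y - f x - A (y - x)) + A (y - x)‖ := by rw [sub_add_cancel]
    _ ≤ ‖f y - f x - A (y - x)‖ + ‖A (y - x)‖ := norm_add_le _ _
    _ ≤ ‖y - x‖ + ‖A‖ * ‖y - x‖ := add_le_add hy.le (A.le_opNorm _)
    _ = (‖A‖ + 1) * ‖y - x‖ := by ring

lemma HasApproxDerivAt.exists_hasMostSlopesLE (h : HasApproxDerivAt Ω f A x) (hf : Measurable f) :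
    ∃ j : ℕ, ∀ r ∈ Ioo (0 : ℝ) (1 / (j + 1)), HasMostSlopesLE volume f j x r := by
  set δ : ℝ≥0∞ := ENNReal.ofReal ((1 / 2) ^ k) / 2
  have hδ : δ ≠ 0 := (ENNReal.half_pos (ENNReal.ofReal_pos.2 (by positivity)).ne').ne'
  have hmeas : MeasurableSet {y | dist (f y) (f x) ≤ (‖A‖ + 1) * dist y x} :=
    measurableSet_le (by fun_prop) (by fun_prop)
  obtain ⟨ρ, hρ, hρA⟩ := mem_nhdsGT_iff_exists_Ioo_subset.1
    (h.isDensityPt_dist_le.eventually_volume_closedBall_sdiff_lt hmeas hδ)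
  obtain ⟨j₁, hj₁⟩ := exists_nat_one_div_lt (mem_Ioi.1 hρ)
  obtain ⟨j₂, hj₂⟩ := exists_nat_ge (‖A‖ + 1)
  refine ⟨max j₁ j₂, fun r hr => ?_⟩
  have hrρ : r < ρ := hr.2.trans_le (le_trans (by gcongr; exact le_max_left _ _) hj₁.le)
  have hhalf : volume (Metric.closedBall x (r / 2)) / 2 = δ * volume (Metric.closedBall x r) := by
    rw [div_eq_mul_one_div r, mul_comm r,
      Measure.addHaar_closedBall_mul_of_pos _ _ (by positivity), finrank_euclideanSpace_fin,
      Measure.addHaar_closedBall_center volume x, div_eq_mul_inv, mul_right_comm, ← div_eq_mul_inv]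
  rw [HasMostSlopesLE, hhalf]
  refine (measure_mono (sdiff_subset_sdiff_right fun y hy => ?_)).trans_lt (hρA ⟨hr.1, hrρ⟩)
  refine (mem_ofPred_eq ▸ hy : dist (f y) (f x) ≤ _).trans ?_
  gcongr
  exact hj₂.trans (by exact_mod_cast le_max_right _ _)

lemma hasApproxDerivAt_of_hasFDerivAt_of_isDensityPt [Nontrivial (EuclideanSpace ℝ (Fin k))]
    (hu : HasFDerivAt u A x) (hSΩ : S ⊆ Ω) (hfu : EqOn f u S) (hx : x ∈ S)
    (hd : IsDensityPt S x) : HasApproxDerivAt Ω f A x := fun ε hε => by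
  refine hd.of_eventually_mem ?_
  filter_upwards [self_mem_nhdsWithin, nhdsWithin_le_nhds (hu.isLittleO.def (half_pos hε))]
    with y hyx hy hyS
  have hpos : 0 < ‖y - x‖ := norm_pos_iff.2 (sub_ne_zero.2 hyx)
  refine ⟨⟨hSΩ hyS, hyx⟩, ?_⟩
  rw [hfu hyS, hfu hx, div_lt_iff₀ hpos]
  exact hy.trans_lt (by gcongr; linarith)

end DensityPoints

section InjectiveDecomposition

variable {E : Type*} [NormedAddCommGroup E] [NormedSpace ℝ E]

lemma exists_injOn_of_approximatesLinearOn [FiniteDimensional ℝ E] (A : E →L[ℝ] E)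
    (hA : A.det ≠ 0) :
    ∃ r : ℝ≥0, r ≠ 0 ∧ ∀ (f : E → E) (s : Set E), ApproximatesLinearOn f A s r → InjOn f s := by
  let e := A.toContinuousLinearEquivOfDetNeZero hA
  rcases subsingleton_or_nontrivial E with hE | hE
  · exact ⟨1, one_ne_zero, fun f s _ => (Function.injective_of_subsingleton f).injOn⟩
  have hpos : 0 < ‖(e.symm : E →L[ℝ] E)‖₊⁻¹ := inv_pos.2 e.nnnorm_symm_pos
  refine ⟨_, (half_pos hpos).ne', fun f s h => ?_⟩
  have he : ApproximatesLinearOn f (e : E →L[ℝ] E) s (‖(e.symm : E →L[ℝ] E)‖₊⁻¹ / 2) := by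
    rwa [ContinuousLinearMap.coe_toContinuousLinearEquivOfDetNeZero]
  exact he.injOn (Or.inr (NNReal.half_lt_self hpos.ne'))

variable [FiniteDimensional ℝ E] [MeasurableSpace E] [BorelSpace E] {μ : Measure E}
  {f : E → E} {J : E → ℝ} {Ω s : Set E} {A : ℕ → Set E}

lemma exists_measurableSet_cover_injOn {f' : E → E →L[ℝ] E}
    (hf' : ∀ x ∈ s, HasFDerivWithinAt f (f' x) s x) (hdet : ∀ x ∈ s, (f' x).det ≠ 0) :
    ∃ t : ℕ → Set E, (∀ i, MeasurableSet (t i)) ∧ s ⊆ ⋃ i, t i ∧ ∀ i, InjOn f (s ∩ t i) := by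
  have hr : ∀ B : E →L[ℝ] E, ∃ r : ℝ≥0, r ≠ 0 ∧ (B.det ≠ 0 → ∀ (f : E → E) (s : Set E),
      ApproximatesLinearOn f B s r → InjOn f s) := fun B => by
    by_cases hB : B.det = 0
    · exact ⟨1, one_ne_zero, fun h => absurd hB h⟩
    · obtain ⟨r, hr, hinj⟩ := exists_injOn_of_approximatesLinearOn B hB
      exact ⟨r, hr, fun _ => hinj⟩
  choose r hr hinj using hr
  obtain ⟨t, B, -, htm, hst, happ, hB⟩ :=
    exists_partition_approximatesLinearOn_of_hasFDerivWithinAt f s f' hf' r hr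
  refine ⟨t, htm, hst, fun i => ?_⟩
  rcases s.eq_empty_or_nonempty with rfl | hne
  · simp only [empty_inter, injOn_empty]
  · obtain ⟨y, hy, hBy⟩ := hB hne i
    exact hinj (B i) (hBy ▸ hdet y hy) f _ (happ i)

/-- A sequence of disjoint measurable pieces of `Ω` on each of which `f` is injective and
differentiable with Jacobian determinant `J`, and which exhaust the part of `Ω` where `J` does not
vanish up to a null set. It reduces the change of variables for `f` to that for injective
differentiable maps. -/
structure IsInjectiveDecomposition (μ : Measure E) (Ω : Set E) (f : E → E) (J : E → ℝ)
    (A : ℕ → Set E) : Prop where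
  measurableSet : ∀ i, MeasurableSet (A i)
  pairwise_disjoint : Pairwise (Function.onFun Disjoint A)
  subset : ∀ i, A i ⊆ Ω
  injOn : ∀ i, InjOn f (A i)
  exists_hasFDerivWithinAt : ∀ i, ∀ x ∈ A i, ∃ f', HasFDerivWithinAt f f' (A i) x ∧ f'.det = J x
  ae_mem_iUnion : ∀ᵐ x ∂μ.restrict Ω, J x ≠ 0 → x ∈ ⋃ i, A i

lemma exists_isInjectiveDecomposition {s : ℕ → Set E} (hs : ∀ j, MeasurableSet (s j))
    (hsΩ : ∀ j, s j ⊆ Ω) (hJ0 : ∀ j, ∀ x ∈ s j, J x ≠ 0)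
    (hf' : ∀ j, ∀ x ∈ s j, ∃ f', HasFDerivWithinAt f f' (s j) x ∧ f'.det = J x)
    (hcover : ∀ᵐ x ∂μ.restrict Ω, J x ≠ 0 → x ∈ ⋃ j, s j) :
    ∃ A, IsInjectiveDecomposition μ Ω f J A := by
  choose! f' hf' hdet using hf'
  choose t ht hst hinj using fun j => exists_measurableSet_cover_injOn (hf' j)
    fun x hx => (hdet j x hx).trans_ne (hJ0 j x hx)
  let B : ℕ → Set E := fun p => s p.unpair.1 ∩ t p.unpair.1 p.unpair.2
  have hBA : ∀ p, disjointed B p ⊆ B p := disjointed_subset B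
  have hsA : ∀ p, disjointed B p ⊆ s p.unpair.1 := fun p => (hBA p).trans inter_subset_left
  refine ⟨disjointed B, MeasurableSet.disjointed fun p => (hs _).inter (ht _ _),
    disjoint_disjointed B, fun p => (hsA p).trans (hsΩ _), fun p => (hinj _ _).mono (hBA p),
    fun p x hx => ⟨_, (hf' _ x (hsA p hx)).mono (hsA p), hdet _ x (hsA p hx)⟩, ?_⟩
  filter_upwards [hcover] with x hx h0
  obtain ⟨j, hj⟩ := mem_iUnion.1 (hx h0)
  obtain ⟨i, hi⟩ := mem_iUnion.1 (hst j hj)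
  rw [iUnion_disjointed]
  refine mem_iUnion.2 ⟨Nat.pair j i, ?_⟩
  simp only [B, Nat.unpair_pair]
  exact ⟨hj, hi⟩

namespace IsInjectiveDecomposition

lemma measurableSet_image (hA : IsInjectiveDecomposition μ Ω f J A) (i : ℕ) :
    MeasurableSet (f '' A i) := by
  choose! f' hf' _ using hA.exists_hasFDerivWithinAt i
  exact measurable_image_of_fderivWithin (hA.measurableSet i) hf' (hA.injOn i)

lemma setLIntegral_comp_eq [μ.IsAddHaarMeasure] (hA : IsInjectiveDecomposition μ Ω f J A) (i : ℕ)
    (G : E → ℝ≥0∞) :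
    ∫⁻ x in A i, ENNReal.ofReal |J x| * G (f x) ∂μ = ∫⁻ y in f '' A i, G y ∂μ := by
  choose! f' hf' hdet using hA.exists_hasFDerivWithinAt i
  rw [lintegral_image_eq_lintegral_abs_det_fderiv_mul μ (hA.measurableSet i) hf' (hA.injOn i)]
  exact setLIntegral_congr_fun (hA.measurableSet i) fun x hx => by simp only [hdet x hx]

lemma lintegral_comp_le_tsum [μ.IsAddHaarMeasure] (hA : IsInjectiveDecomposition μ Ω f J A)
    (G : E → ℝ≥0∞) :
    ∫⁻ x in Ω, ENNReal.ofReal |J x| * G (f x) ∂μ ≤ ∑' i, ∫⁻ y in f '' A i, G y ∂μ := by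
  calc ∫⁻ x in Ω, ENNReal.ofReal |J x| * G (f x) ∂μ
      ≤ ∫⁻ x in Ω, (⋃ i, A i).indicator (fun x => ENNReal.ofReal |J x| * G (f x)) x ∂μ := by
        refine lintegral_mono_ae ?_
        filter_upwards [hA.ae_mem_iUnion] with x hx
        by_cases h0 : J x = 0
        · simp [h0]
        · rw [indicator_of_mem (hx h0)]
    _ ≤ ∫⁻ x in ⋃ i, A i, ENNReal.ofReal |J x| * G (f x) ∂μ := by
        rw [← lintegral_indicator (MeasurableSet.iUnion hA.measurableSet)]
        exact setLIntegral_le_lintegral _ _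
    _ = ∑' i, ∫⁻ y in f '' A i, G y ∂μ := by
        rw [lintegral_iUnion hA.measurableSet hA.pairwise_disjoint]
        simp only [hA.setLIntegral_comp_eq]

end IsInjectiveDecomposition

lemma encard_setOf_mem_image_le {ι X Y : Type*} {Ω : Set X} {f : X → Y} {A : ι → Set X}
    (hA : Pairwise (Function.onFun Disjoint A)) (hAΩ : ∀ i, A i ⊆ Ω) (y : Y) :
    {i | y ∈ f '' A i}.encard ≤ (f ⁻¹' {y} ∩ Ω).encard := by
  choose x hxA hxy using fun i : {i | y ∈ f '' A i} => i.2
  have hinj : Function.Injective x := fun i j hij => by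
    by_contra hne
    exact disjoint_left.1 (hA fun h => hne (Subtype.ext h)) (hxA i) (hij ▸ hxA j)
  rw [encard, ← encard_univ, ← hinj.encard_image, image_univ]
  exact encard_le_encard (range_subset_iff.2 fun i => ⟨hxy i, hAΩ _ (hxA i)⟩)

lemma tsum_indicator_image_le {ι X Y : Type*} {Ω : Set X} {f : X → Y} {A : ι → Set X}
    (hA : Pairwise (Function.onFun Disjoint A)) (hAΩ : ∀ i, A i ⊆ Ω) {K : ℕ} {y : Y}
    (hK : (f ⁻¹' {y} ∩ Ω).encard ≤ K) (G : Y → ℝ≥0∞) :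
    ∑' i, (f '' A i).indicator G y ≤ K * (⋃ i, f '' A i).indicator G y := by
  classical
  rw [ENNReal.tsum_eq_iSup_sum]
  refine iSup_le fun s => ?_
  by_cases hy : y ∈ ⋃ i, f '' A i
  · simp only [indicator_of_mem hy, indicator_apply]
    rw [← Finset.sum_filter, Finset.sum_const, nsmul_eq_mul]
    gcongr
    have hcard : ((s.filter fun i => y ∈ f '' A i : Finset ι) : Set ι).encard ≤ K :=
      (encard_le_encard fun i hi => (Finset.mem_filter.1 hi).2).trans
        ((encard_setOf_mem_image_le hA hAΩ y).trans hK)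
    rwa [encard_coe_eq_coe_finsetCard, Nat.cast_le] at hcard
  · rw [mem_iUnion, not_exists] at hy
    simp only [indicator_of_notMem (hy _), Finset.sum_const_zero, zero_le]

lemma IsInjectiveDecomposition.exists_lintegral_comp_le [μ.IsAddHaarMeasure]
    (hA : IsInjectiveDecomposition μ Ω f J A) {K : ℕ}
    (hK : ∀ᵐ y ∂μ, (f ⁻¹' {y} ∩ Ω).encard ≤ K) :
    ∃ D ⊆ f '' Ω, MeasurableSet D ∧ ∀ G : E → ℝ≥0∞, Measurable G →
      ∫⁻ x in Ω, ENNReal.ofReal |J x| * G (f x) ∂μ ≤ K * ∫⁻ y in D, G y ∂μ := by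
  have hD : MeasurableSet (⋃ i, f '' A i) := MeasurableSet.iUnion hA.measurableSet_image
  refine ⟨_, iUnion_subset fun i => image_mono (hA.subset i), hD, fun G hG => ?_⟩
  calc ∫⁻ x in Ω, ENNReal.ofReal |J x| * G (f x) ∂μ
      ≤ ∑' i, ∫⁻ y in f '' A i, G y ∂μ := hA.lintegral_comp_le_tsum G
    _ = ∫⁻ y, ∑' i, (f '' A i).indicator G y ∂μ := by
        rw [lintegral_tsum fun i => (hG.indicator (hA.measurableSet_image i)).aemeasurable]
        simp only [lintegral_indicator (hA.measurableSet_image _)]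
    _ ≤ ∫⁻ y, K * (⋃ i, f '' A i).indicator G y ∂μ := by
        refine lintegral_mono_ae ?_
        filter_upwards [hK] with y hy
        exact tsum_indicator_image_le hA.pairwise_disjoint hA.subset hy G
    _ = K * ∫⁻ y in ⋃ i, f '' A i, G y ∂μ := by
        rw [lintegral_const_mul' _ _ (ENNReal.natCast_ne_top K), lintegral_indicator hD]

end InjectiveDecomposition

section AreaInequality

variable {k : ℕ} {Ω : Set (EuclideanSpace ℝ (Fin k))}
  {f u : EuclideanSpace ℝ (Fin k) → EuclideanSpace ℝ (Fin k)}
  {J : EuclideanSpace ℝ (Fin k) → ℝ}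

lemma ae_det_fderiv_eq_of_lipschitzWith (hΩ : MeasurableSet Ω) (hf : Measurable f) {C : ℝ≥0}
    (hu : LipschitzWith C u)
    (hdiff : ∀ᵐ x ∂(volume.restrict Ω), ∃ A, HasApproxDerivAt Ω f A x)
    (hJ : ∀ x A, HasApproxDerivAt Ω f A x → J x = A.det) :
    ∀ᵐ x ∂(volume.restrict Ω), f x = u x → DifferentiableAt ℝ u x ∧ (fderiv ℝ u x).det = J x := by
  have hR : MeasurableSet (Ω ∩ {x | f x = u x}) :=
    hΩ.inter (measurableSet_eq_fun hf hu.continuous.measurable)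
  have hdens := (ae_restrict_iff' hR).1
    (Besicovitch.ae_tendsto_measure_inter_div volume (Ω ∩ {x | f x = u x}))
  filter_upwards [hdiff, ae_restrict_mem hΩ, ae_restrict_of_ae hdens,
    ae_restrict_of_ae hu.ae_differentiableAt] with x ⟨A, hA⟩ hxΩ hx hux hfu
  have := hA.nontrivial
  exact ⟨hux, (hJ x _ (hasApproxDerivAt_of_hasFDerivAt_of_isDensityPt hux.hasFDerivAt
    inter_subset_left (fun y hy => hy.2) ⟨hxΩ, hfu⟩ (hx ⟨hxΩ, hfu⟩))).symm⟩

lemma exists_isInjectiveDecomposition_of_hasApproxDerivAt (hΩ : MeasurableSet Ω)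
    (hf : Measurable f) (hdiff : ∀ᵐ x ∂(volume.restrict Ω), ∃ A, HasApproxDerivAt Ω f A x)
    (hJ : ∀ x A, HasApproxDerivAt Ω f A x → J x = A.det) :
    ∃ A, IsInjectiveDecomposition volume Ω f J A := by
  obtain ⟨u, hu, hcover⟩ := exists_lipschitz_cover_of_hasMostSlopesLE volume f
  obtain ⟨M, hM, hMm, hMΩ⟩ : ∃ M, (∀ x ∈ M, x ∈ Ω ∧ ∀ j, f x = u j x →
      DifferentiableAt ℝ (u j) x ∧ (fderiv ℝ (u j) x).det = J x) ∧ MeasurableSet M ∧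
      ∀ᵐ x ∂(volume.restrict Ω), x ∈ M := by
    have h := (ae_restrict_mem hΩ).and (ae_all_iff.2 fun j =>
      ae_det_fderiv_eq_of_lipschitzWith hΩ hf (hu j).choose_spec hdiff hJ)
    obtain ⟨M, hMae, hMm, hM⟩ := h.exists_measurable_mem
    exact ⟨M, hM, hMm, hMae⟩
  let s : ℕ → Set (EuclideanSpace ℝ (Fin k)) := fun j =>
    M ∩ ({x | f x = u j x} ∩ {x | (fderiv ℝ (u j) x).det ≠ 0})
  refine exists_isInjectiveDecomposition (s := s) (fun j => hMm.inter ?_)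
    (fun j x hx => (hM x hx.1).1)
    (fun j x ⟨hxM, hfu, hdet⟩ => ((hM x hxM).2 j hfu).2.symm.trans_ne hdet)
    (fun j x ⟨hxM, hfu, _⟩ => ?_) ?_
  · exact (measurableSet_eq_fun hf (hu j).choose_spec.continuous.measurable).inter
      ((ContinuousLinearMap.continuous_det.measurable.comp (measurable_fderiv ℝ (u j)))
        (measurableSet_singleton 0).compl)
  · obtain ⟨hux, hdet⟩ := (hM x hxM).2 j hfu
    exact ⟨_, hux.hasFDerivAt.hasFDerivWithinAt.congr (fun y hy => hy.2.1) hfu, hdet⟩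
  · filter_upwards [hdiff, hMΩ] with x ⟨A, hA⟩ hxM h0
    obtain ⟨j, hj⟩ := hcover x (hA.exists_hasMostSlopesLE hf)
    exact mem_iUnion.2 ⟨j, hxM, hj, ((hM x hxM).2 j hj).2.trans_ne h0⟩

end AreaInequality

section Multiplicity

variable {ι X Y : Type*} {Ω : Set X} {K L : ℕ}

lemma ae_encard_fiber_le [MeasurableSpace X] {μ : Measure X} {f : X → X}
    (hmaps : MapsTo f Ω Ω)
    (hK : μ {x | x ∈ Ω ∧ (K : ℕ∞) < (f ⁻¹' {x} ∩ Ω).encard} = 0) :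
    ∀ᵐ y ∂μ, (f ⁻¹' {y} ∩ Ω).encard ≤ K := by
  filter_upwards [measure_eq_zero_iff_ae_notMem.1 hK] with y hy
  by_contra! hlt
  obtain ⟨x, hxy, hx⟩ := encard_pos.1 ((bot_le (a := (K : ℕ∞))).trans_lt hlt)
  exact hy ⟨mem_singleton_iff.1 hxy ▸ hmaps hx, hlt⟩

lemma measure_iInter_image_eq_zero [MeasurableSpace Y] {N : ℕ} {μ : Measure Y} {f : Fin N → X → Y}
    (hL : L ∈ upperBounds {l : ℕ | 1 ≤ l ∧ l ≤ N ∧ ∃ s : Finset (Fin N), s.card = l ∧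
      0 < μ (⋂ n ∈ s, f n '' Ω)}) (s : Finset (Fin N)) (hs : L < s.card) :
    μ (⋂ n ∈ s, f n '' Ω) = 0 := by
  by_contra hne
  refine hs.not_ge (hL ⟨(Nat.zero_le L).trans_lt hs, ?_, s, rfl, pos_iff_ne_zero.2 hne⟩)
  simpa using s.card_le_univ

lemma sum_setLIntegral_le [Fintype ι] [MeasurableSpace X] {μ : Measure X} {D : ι → Set X}
    (hD : ∀ n, MeasurableSet (D n)) (hΩ : MeasurableSet Ω) (hDΩ : ∀ n, D n ⊆ Ω)
    (hL : ∀ s : Finset ι, L < s.card → μ (⋂ n ∈ s, D n) = 0) {G : X → ℝ≥0∞} (hG : Measurable G) :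
    ∑ n, ∫⁻ y in D n, G y ∂μ ≤ L * ∫⁻ y in Ω, G y ∂μ := by
  classical
  have hover : ∀ᵐ y ∂μ, ∀ s : Finset ι, L < s.card → y ∉ ⋂ n ∈ s, D n := by
    refine ae_all_iff.2 fun s => ?_
    by_cases hs : L < s.card
    · filter_upwards [measure_eq_zero_iff_ae_notMem.1 (hL s hs)] with y hy _ using hy
    · exact Eventually.of_forall fun y h => absurd h hs
  calc ∑ n, ∫⁻ y in D n, G y ∂μ = ∫⁻ y, ∑ n, (D n).indicator G y ∂μ := by
        rw [lintegral_finsetSum _ fun n _ => hG.indicator (hD n)]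
        simp only [lintegral_indicator (hD _)]
    _ ≤ ∫⁻ y, Ω.indicator (fun y => L * G y) y ∂μ := by
        refine lintegral_mono_ae ?_
        filter_upwards [hover] with y hy
        by_cases hyΩ : y ∈ Ω
        · rw [indicator_of_mem hyΩ]
          simp only [indicator_apply]
          rw [← Finset.sum_filter, Finset.sum_const, nsmul_eq_mul]
          gcongr
          by_contra! hcard
          exact hy _ hcard (mem_iInter₂.2 fun n hn => (Finset.mem_filter.1 hn).2)
        · rw [indicator_of_notMem hyΩ]
          exact (Finset.sum_eq_zero fun n _ => indicator_of_notMem (fun h => hyΩ (hDΩ n h)) _).le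
    _ = L * ∫⁻ y in Ω, G y ∂μ := by
        rw [lintegral_indicator hΩ, lintegral_const_mul' _ _ (ENNReal.natCast_ne_top L)]

lemma sum_lintegral_comp_le [Fintype ι] {E : Type*} [NormedAddCommGroup E] [NormedSpace ℝ E]
    [FiniteDimensional ℝ E] [MeasurableSpace E] [BorelSpace E] {μ : Measure E}
    [μ.IsAddHaarMeasure] {Ω : Set E} (hΩ : MeasurableSet Ω) {f : ι → E → E} {J : ι → E → ℝ}
    (hA : ∀ n, ∃ A, IsInjectiveDecomposition μ Ω (f n) (J n) A) (hmaps : ∀ n, MapsTo (f n) Ω Ω)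
    (hK : ∀ n, ∀ᵐ y ∂μ, (f n ⁻¹' {y} ∩ Ω).encard ≤ K)
    (hL : ∀ s : Finset ι, L < s.card → μ (⋂ n ∈ s, f n '' Ω) = 0) {G : E → ℝ≥0∞}
    (hG : Measurable G) :
    ∑ n, ∫⁻ x in Ω, ENNReal.ofReal |J n x| * G (f n x) ∂μ ≤ K * L * ∫⁻ y in Ω, G y ∂μ := by
  choose A hA using hA
  choose D hDf hDm hD using fun n => (hA n).exists_lintegral_comp_le (hK n)
  calc ∑ n, ∫⁻ x in Ω, ENNReal.ofReal |J n x| * G (f n x) ∂μ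
      ≤ ∑ n, K * ∫⁻ y in D n, G y ∂μ := Finset.sum_le_sum fun n _ => hD n G hG
    _ = K * ∑ n, ∫⁻ y in D n, G y ∂μ := by rw [← Finset.mul_sum]
    _ ≤ K * (L * ∫⁻ y in Ω, G y ∂μ) := by
        gcongr
        exact sum_setLIntegral_le hDm hΩ (fun n => (hDf n).trans (hmaps n).image_subset)
          (fun s hs => measure_mono_null (iInter₂_mono fun n _ => hDf n) (hL s hs)) hG
    _ = K * L * ∫⁻ y in Ω, G y ∂μ := by rw [← mul_assoc]

end Multiplicity

section AbsKernel

variable {X ι V : Type*} [MeasurableSpace X] [Fintype ι] [NormedAddCommGroup V]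
  [MeasurableSpace V] [OpensMeasurableSpace V] {μ : Measure X} {f : ι → X → X} {g : ι → X → V}

/-- The kernel `x ↦ ∑ n, ‖g n x‖ δ_{f n x}`. The operator it induces on nonnegative functions is
`G ↦ ∑ n, ‖g n‖ · (G ∘ f n)`, which dominates `Pop f g`. -/
noncomputable def absKernel (hf : ∀ n, Measurable (f n)) (hg : ∀ n, Measurable (g n)) :
    Kernel X X where
  toFun x := ∑ n, ‖g n x‖ₑ • Measure.dirac (f n x)
  measurable' := Measure.measurable_of_measurable_coe _ fun s hs => by
    simp only [Measure.finsetSum_apply, Measure.smul_apply, smul_eq_mul]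
    exact Finset.measurable_fun_sum _ fun n _ => (hg n).enorm.mul
      ((Measure.measurable_coe hs).comp (Measure.measurable_dirac.comp (hf n)))

variable (hf : ∀ n, Measurable (f n)) (hg : ∀ n, Measurable (g n))

lemma lintegral_absKernel {G : X → ℝ≥0∞} (hG : Measurable G) (x : X) :
    ∫⁻ y, G y ∂absKernel hf hg x = ∑ n, ‖g n x‖ₑ * G (f n x) := by
  change ∫⁻ y, G y ∂(∑ n, ‖g n x‖ₑ • Measure.dirac (f n x)) = _
  simp only [lintegral_finsetSum_measure, lintegral_smul_measure, lintegral_dirac' _ hG,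
    smul_eq_mul]

lemma absKernel_apply_univ (x : X) : absKernel hf hg x univ = ∑ n, ‖g n x‖ₑ := by
  simpa using lintegral_absKernel hf hg (measurable_one (α := ℝ≥0∞)) x

lemma ae_absKernel_iff [MeasurableSingletonClass X] {p : X → Prop} {x : X} :
    (∀ᵐ y ∂absKernel hf hg x, p y) ↔ ∀ n, g n x ≠ 0 → p (f n x) := by
  change (∀ᵐ y ∂(∑ n, ‖g n x‖ₑ • Measure.dirac (f n x)), p y) ↔ _
  rw [ae_finsetSum_measure_iff]
  refine ⟨fun h n hn => ?_, fun h n _ => ?_⟩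
  · simpa [Measure.ae_ennreal_smul_measure_iff (enorm_ne_zero.2 hn), ae_dirac_eq] using
      h n (Finset.mem_univ n)
  · by_cases hn : g n x = 0
    · simp [hn]
    · simpa [Measure.ae_ennreal_smul_measure_iff (enorm_ne_zero.2 hn), ae_dirac_eq] using h n hn

lemma absKernel_apply_univ_le {x : X} {α : ℝ≥0} (hα : ∀ n, ‖g n x‖ ≤ α / Fintype.card ι) :
    absKernel hf hg x univ ≤ α := by
  have hsum : ∑ n, ‖g n x‖ ≤ α :=
    calc ∑ n, ‖g n x‖ ≤ Fintype.card ι • (α / Fintype.card ι : ℝ) :=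
          Finset.sum_le_card_nsmul _ _ _ fun n _ => hα n
      _ = α * (Fintype.card ι / Fintype.card ι) := by rw [nsmul_eq_mul, mul_div_left_comm]
      _ ≤ α := mul_le_of_le_one_right α.coe_nonneg (div_self_le_one _)
  have hsum' : ∑ n, ‖g n x‖₊ ≤ α := by
    rw [← NNReal.coe_le_coe]
    simpa only [NNReal.coe_sum, coe_nnnorm] using hsum
  simp only [absKernel_apply_univ, enorm_eq_nnnorm]
  exact_mod_cast hsum'

lemma lintegral_lintegral_absKernel_le {w : ι → X → ℝ≥0∞} {c : ℝ≥0}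
    (hc : ∀ n, ∀ᵐ x ∂μ, ‖g n x‖ₑ ≤ c * w n x) {G : X → ℝ≥0∞} (hG : Measurable G) :
    ∫⁻ x, ∫⁻ y, G y ∂absKernel hf hg x ∂μ ≤ c * ∑ n, ∫⁻ x, w n x * G (f n x) ∂μ := by
  simp_rw [lintegral_absKernel hf hg hG]
  refine (lintegral_finsetSum _ fun n _ => (hg n).enorm.mul (hG.comp (hf n))).trans_le ?_
  rw [Finset.mul_sum]
  refine Finset.sum_le_sum fun n _ => ?_
  rw [← lintegral_const_mul' _ _ ENNReal.coe_ne_top]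
  refine lintegral_mono_ae ?_
  filter_upwards [hc n] with x hx
  exact (mul_le_mul' hx le_rfl).trans_eq (mul_assoc _ _ _)

lemma isBoundedKernel_absKernel {E : Type*} [NormedAddCommGroup E] [NormedSpace ℝ E]
    [FiniteDimensional ℝ E] [MeasurableSpace E] [BorelSpace E] {μ : Measure E}
    [μ.IsAddHaarMeasure] {Ω : Set E} (hΩ : MeasurableSet Ω) {f : ι → E → E} {g : ι → E → V}
    {J : ι → E → ℝ} (hA : ∀ n, ∃ A, IsInjectiveDecomposition μ Ω (f n) (J n) A)
    (hf : ∀ n, Measurable (f n)) (hg : ∀ n, Measurable (g n)) (hmaps : ∀ n, MapsTo (f n) Ω Ω)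
    {K L : ℕ} (hK : ∀ n, ∀ᵐ y ∂μ, (f n ⁻¹' {y} ∩ Ω).encard ≤ K)
    (hL : ∀ s : Finset ι, L < s.card → μ (⋂ n ∈ s, f n '' Ω) = 0) {α : ℝ≥0}
    (hα : ∀ n, ∀ᵐ x ∂μ.restrict Ω,
      ‖g n x‖ ≤ α * min (|J n x| / ((K : ℝ) * (L : ℝ))) (1 / (Fintype.card ι : ℝ))) :
    IsBoundedKernel (absKernel hf hg) (μ.restrict Ω) α := by
  constructor
  · filter_upwards [ae_all_iff.2 hα] with x hx
    refine absKernel_apply_univ_le hf hg fun n => ?_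
    calc ‖g n x‖ ≤ α * min (|J n x| / ((K : ℝ) * (L : ℝ))) (1 / (Fintype.card ι : ℝ)) := hx n
      _ ≤ α * (1 / Fintype.card ι) := by
          gcongr
          exact min_le_right _ _
      _ = α / Fintype.card ι := mul_one_div _ _
  · intro G hG
    have hc (n : ι) : ∀ᵐ x ∂μ.restrict Ω,
        ‖g n x‖ₑ ≤ (α / (K * L) : ℝ≥0) * ENNReal.ofReal |J n x| := by
      filter_upwards [hα n] with x hx
      rw [← ofReal_norm, ← ENNReal.ofReal_coe_nnreal, ← ENNReal.ofReal_mul (by positivity)]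
      refine ENNReal.ofReal_le_ofReal (hx.trans ?_)
      push_cast
      rw [div_mul_eq_mul_div, mul_div_assoc]
      gcongr
      exact min_le_left _ _
    have hcancel : α / (K * L) * (K * L) ≤ α := by
      rw [div_mul_eq_mul_div, mul_div_assoc]
      exact mul_le_of_le_one_right' (div_self_le_one _)
    calc ∫⁻ x in Ω, ∫⁻ y, G y ∂absKernel hf hg x ∂μ
        ≤ (α / (K * L) : ℝ≥0) * ∑ n, ∫⁻ x in Ω, ENNReal.ofReal |J n x| * G (f n x) ∂μ :=
          lintegral_lintegral_absKernel_le hf hg hc hG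
      _ ≤ (α / (K * L) : ℝ≥0) * (K * L * ∫⁻ y in Ω, G y ∂μ) := by
          gcongr
          exact sum_lintegral_comp_le hΩ hA hmaps hK hL hG
      _ ≤ α * ∫⁻ y in Ω, G y ∂μ := by
          rw [← mul_assoc]
          gcongr
          exact_mod_cast hcancel

end AbsKernel

section NeumannSeries

variable {k N : ℕ} {𝕜 : Type*} [RCLike 𝕜] {μ : Measure (EuclideanSpace ℝ (Fin k))}
  {E : ℝ≥0∞ → ℝ≥0∞} {b : ℝ≥0}
  {f : Fin N → EuclideanSpace ℝ (Fin k) → EuclideanSpace ℝ (Fin k)}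
  {g : Fin N → EuclideanSpace ℝ (Fin k) → 𝕜} {h u : EuclideanSpace ℝ (Fin k) → 𝕜}
  {hf : ∀ n, Measurable (f n)} {hg : ∀ n, Measurable (g n)}

lemma measurable_Pop_iterate (hf : ∀ n, Measurable (f n)) (hg : ∀ n, Measurable (g n))
    (hh : Measurable h) (n : ℕ) : Measurable ((Pop f g)^[n] h) := by
  induction n with
  | zero => exact hh
  | succ n ih =>
    rw [Function.iterate_succ_apply']
    exact Finset.measurable_fun_sum _ fun i _ => (hg i).mul (ih.comp (hf i))

lemma enorm_Pop_iterate_le (hf : ∀ n, Measurable (f n)) (hg : ∀ n, Measurable (g n))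
    (hh : Measurable h) (n : ℕ) (x : EuclideanSpace ℝ (Fin k)) :
    ‖(Pop f g)^[n] h x‖ₑ ≤ ∫⁻ y, ‖h y‖ₑ ∂(absKernel hf hg ^ n) x := by
  induction n generalizing x with
  | zero => exact (lintegral_kernel_one hh.enorm x).ge
  | succ n ih =>
    rw [Function.iterate_succ_apply', lintegral_kernel_pow_succ _ _ hh.enorm,
      lintegral_absKernel hf hg hh.enorm.lintegral_kernel]
    refine (enorm_sum_le _ _).trans (Finset.sum_le_sum fun i _ => ?_)
    rw [enorm_mul]
    gcongr
    exact ih _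

lemma sum_range_succ_Pop_iterate (f : Fin N → EuclideanSpace ℝ (Fin k) → EuclideanSpace ℝ (Fin k))
    (g : Fin N → EuclideanSpace ℝ (Fin k) → 𝕜) (h : EuclideanSpace ℝ (Fin k) → 𝕜) (m : ℕ)
    (x : EuclideanSpace ℝ (Fin k)) : ∑ i ∈ Finset.range (m + 1), (Pop f g)^[i] h x =
      Pop f g (fun y => ∑ i ∈ Finset.range m, (Pop f g)^[i] h y) x + h x := by
  rw [Finset.sum_range_succ', Function.iterate_zero_apply]
  simp only [Function.iterate_succ_apply', Pop, Finset.mul_sum]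
  rw [Finset.sum_comm]

/-- The Neumann series `∑ Pⁿ h` of `P = Pop f g`, summed pointwise; it is `0` at the points where
the series is not summable. -/
noncomputable def neumannSum (f : Fin N → EuclideanSpace ℝ (Fin k) → EuclideanSpace ℝ (Fin k))
    (g : Fin N → EuclideanSpace ℝ (Fin k) → 𝕜) (h : EuclideanSpace ℝ (Fin k) → 𝕜) :
    EuclideanSpace ℝ (Fin k) → 𝕜 :=
  fun x => ∑' n, (Pop f g)^[n] h x

lemma measurable_neumannSum (hf : ∀ n, Measurable (f n)) (hg : ∀ n, Measurable (g n))
    (hh : Measurable h) : Measurable (neumannSum f g h) :=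
  Measurable.tsum fun n => measurable_Pop_iterate hf hg hh n

lemma ae_summable_Pop_iterate [SFinite μ] (hE : IsQuasiconcave E)
    (hκ : IsBoundedKernel (absKernel hf hg) μ b) (hb : 2 * b < 1) (hh : Measurable h)
    (hfin : lorentzFunctional E μ (fun x => ‖h x‖ₑ) ≠ ∞) :
    ∀ᵐ x ∂μ, Summable fun n => (Pop f g)^[n] h x := by
  have hle := lorentzFunctional_tsum_lintegral_pow_le hE hκ hh.enorm 0
  have hb' : (2 * b : ℝ≥0∞) < 1 := by exact_mod_cast hb
  have htop := ne_top_of_le_ne_top (ENNReal.mul_ne_top (ENNReal.mul_ne_top (by simp)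
    (ENNReal.inv_ne_top.2 (tsub_pos_of_lt hb').ne')) hfin) hle
  filter_upwards [ae_ne_top_of_lorentzFunctional_ne_top hE htop] with x hx
  exact Summable.of_enorm (ne_top_of_le_ne_top hx
    (ENNReal.tsum_le_tsum fun n => enorm_Pop_iterate_le hf hg hh n x))

lemma lorentzFunctional_neumannSum_sub_le [SFinite μ] (hE : IsQuasiconcave E)
    (hκ : IsBoundedKernel (absKernel hf hg) μ b) (hh : Measurable h)
    (hsum : ∀ᵐ x ∂μ, Summable fun n => (Pop f g)^[n] h x) (m : ℕ) :
    lorentzFunctional E μ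
        (fun x => ‖neumannSum f g h x - ∑ n ∈ Finset.range m, (Pop f g)^[n] h x‖ₑ) ≤
      (2 * b) ^ m * (1 - 2 * (b : ℝ≥0∞))⁻¹ * lorentzFunctional E μ (fun x => ‖h x‖ₑ) := by
  refine (lorentzFunctional_mono_ae hE.monotone ?_).trans
    (lorentzFunctional_tsum_lintegral_pow_le hE hκ hh.enorm m)
  filter_upwards [hsum] with x hx
  rw [neumannSum, ← hx.sum_add_tsum_nat_add m, add_sub_cancel_left]
  exact enorm_tsum_le_tsum_enorm.trans
    (ENNReal.tsum_le_tsum fun i => enorm_Pop_iterate_le hf hg hh (i + m) x)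

lemma neumannSum_ae_eq (hκ : IsBoundedKernel (absKernel hf hg) μ b)
    (hsum : ∀ᵐ x ∂μ, Summable fun n => (Pop f g)^[n] h x) :
    ∀ᵐ x ∂μ, neumannSum f g h x = Pop f g (neumannSum f g h) x + h x := by
  filter_upwards [hsum, hκ.ae_ae hsum] with x hx hxf
  rw [ae_absKernel_iff] at hxf
  refine tendsto_nhds_unique
    (hx.hasSum.tendsto_sum_nat.comp (tendsto_add_atTop_nat 1)) ?_
  simp only [Function.comp_def, sum_range_succ_Pop_iterate]
  refine (tendsto_finsetSum _ fun n _ => ?_).add_const _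
  obtain hn | hn := eq_or_ne (g n x) 0
  · simp [hn]
  · exact (hxf n hn).hasSum.tendsto_sum_nat.const_mul _

lemma ae_eq_sum_add_Pop_iterate (hκ : IsBoundedKernel (absKernel hf hg) μ b)
    (hu : ∀ᵐ x ∂μ, u x = Pop f g u x + h x) (m : ℕ) :
    ∀ᵐ x ∂μ, u x = ∑ i ∈ Finset.range m, (Pop f g)^[i] h x + (Pop f g)^[m] u x := by
  induction m with
  | zero => exact Eventually.of_forall fun x => by simp
  | succ m ih =>
    filter_upwards [hu, hκ.ae_ae ih] with x hx hxf
    rw [ae_absKernel_iff] at hxf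
    rw [hx, sum_range_succ_Pop_iterate, Function.iterate_succ_apply', add_right_comm]
    simp only [Pop, ← Finset.sum_add_distrib, ← mul_add]
    congr 1
    refine Finset.sum_congr rfl fun n _ => ?_
    obtain hn | hn := eq_or_ne (g n x) 0
    · simp [hn]
    · exact congrArg _ (hxf n hn)

lemma ae_eq_neumannSum (hκ : IsBoundedKernel (absKernel hf hg) μ b)
    (hsum : ∀ᵐ x ∂μ, Summable fun n => (Pop f g)^[n] h x)
    (hsum' : ∀ᵐ x ∂μ, Summable fun n => (Pop f g)^[n] u x)
    (hu : ∀ᵐ x ∂μ, u x = Pop f g u x + h x) : u =ᵐ[μ] neumannSum f g h := by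
  filter_upwards [hsum, hsum', ae_all_iff.2 (ae_eq_sum_add_Pop_iterate hκ hu)] with x hx hx' hxm
  have hlim := hx.hasSum.tendsto_sum_nat.add hx'.tendsto_atTop_zero
  simp only [← hxm, add_zero] at hlim
  exact tendsto_nhds_unique tendsto_const_nhds hlim

end NeumannSeries

section LorentzSpace

variable {k N : ℕ} {𝕜 : Type*} [RCLike 𝕜] {Ω : Set (EuclideanSpace ℝ (Fin k))} {σ : ℝ → ℝ}
  {f : Fin N → EuclideanSpace ℝ (Fin k) → EuclideanSpace ℝ (Fin k)}
  {g : Fin N → EuclideanSpace ℝ (Fin k) → 𝕜} {h : EuclideanSpace ℝ (Fin k) → 𝕜}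
  {hf : ∀ n, Measurable (f n)} {hg : ∀ n, Measurable (g n)} {α : ℝ≥0}

lemma lorentzNorm_eq_lorentzFunctional (hΩ : MeasurableSet Ω) (σ : ℝ → ℝ)
    (u : EuclideanSpace ℝ (Fin k) → 𝕜) :
    lorentzNorm Ω σ u =
      lorentzFunctional (extInv σ) (volume.restrict Ω) (fun x => ‖u x‖ₑ) := by
  refine setLIntegral_congr_fun measurableSet_Ioi fun s hs => ?_
  have hset : {x | ENNReal.ofReal s < ‖u x‖ₑ} ∩ Ω = {x | x ∈ Ω ∧ s < ‖u x‖} := by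
    ext x
    rw [mem_inter_iff, and_comm, mem_ofPred_eq, ← ofReal_norm,
      ENNReal.ofReal_lt_ofReal_iff_of_nonneg (le_of_lt hs)]
    rfl
  simp only [distribFn]
  rw [Measure.restrict_apply' hΩ, hset]

lemma memLorentz_of_lorentzNorm_lt_top (hΩ : MeasurableSet Ω) (hE : IsQuasiconcave (extInv σ))
    {u : EuclideanSpace ℝ (Fin k) → 𝕜} (hu : Measurable u) (h : lorentzNorm Ω σ u < ∞) :
    MemLorentz Ω σ u := by
  refine ⟨hu, fun x _ => ⟨Ω ∩ Metric.ball x 1, inter_mem self_mem_nhdsWithin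
    (mem_nhdsWithin_of_mem_nhds (Metric.ball_mem_nhds x one_pos)), hu.aestronglyMeasurable, ?_⟩, h⟩
  rw [lorentzNorm_eq_lorentzFunctional hΩ] at h
  have hfin := setLIntegral_ne_top_of_lorentzFunctional_ne_top hE hu.enorm h.ne
    (S := Metric.ball x 1)
    (ne_top_of_le_ne_top measure_ball_lt_top.ne (Measure.restrict_apply_le _ _))
  rw [Measure.restrict_restrict measurableSet_ball, inter_comm] at hfin
  exact hfin.lt_top

lemma lorentzNorm_sub_comm (Ω : Set (EuclideanSpace ℝ (Fin k))) (σ : ℝ → ℝ)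
    (u v : EuclideanSpace ℝ (Fin k) → 𝕜) :
    lorentzNorm Ω σ (fun x => u x - v x) = lorentzNorm Ω σ (fun x => v x - u x) := by
  simp only [lorentzNorm, distribFn, norm_sub_rev]

lemma ae_summable_Pop_iterate_of_memLorentz (hΩ : MeasurableSet Ω)
    (hE : IsQuasiconcave (extInv σ))
    (hκ : IsBoundedKernel (absKernel hf hg) (volume.restrict Ω) α) (hα : 2 * α < 1)
    (hh : MemLorentz Ω σ h) :
    ∀ᵐ x ∂(volume.restrict Ω), Summable fun n => (Pop f g)^[n] h x :=
  ae_summable_Pop_iterate hE hκ hα hh.1 (lorentzNorm_eq_lorentzFunctional hΩ σ h ▸ hh.2.2.ne)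

lemma lorentzNorm_neumannSum_sub_le (hΩ : MeasurableSet Ω) (hE : IsQuasiconcave (extInv σ))
    (hκ : IsBoundedKernel (absKernel hf hg) (volume.restrict Ω) α) (hα : 2 * α < 1)
    (hh : MemLorentz Ω σ h) (m : ℕ) :
    lorentzNorm Ω σ (fun x => neumannSum f g h x - ∑ n ∈ Finset.range m, (Pop f g)^[n] h x) ≤
      ENNReal.ofReal ((2 * α) ^ m / (1 - 2 * α)) * lorentzNorm Ω σ h := by
  have hconst : ENNReal.ofReal ((2 * α) ^ m / (1 - 2 * α)) =
      (2 * α) ^ m * (1 - 2 * (α : ℝ≥0∞))⁻¹ := by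
    have hα' : 2 * (α : ℝ) < 1 := by exact_mod_cast hα
    rw [ENNReal.ofReal_div_of_pos (sub_pos.2 hα'), ENNReal.ofReal_sub _ (by positivity),
      ENNReal.ofReal_pow (by positivity), ENNReal.ofReal_mul zero_le_two,
      ENNReal.ofReal_coe_nnreal, ENNReal.ofReal_ofNat, ENNReal.ofReal_one, div_eq_mul_inv]
  rw [hconst, lorentzNorm_eq_lorentzFunctional hΩ, lorentzNorm_eq_lorentzFunctional hΩ]
  exact lorentzFunctional_neumannSum_sub_le hE hκ hh.1
    (ae_summable_Pop_iterate_of_memLorentz hΩ hE hκ hα hh) m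

lemma memLorentz_neumannSum (hΩ : MeasurableSet Ω) (hE : IsQuasiconcave (extInv σ))
    (hκ : IsBoundedKernel (absKernel hf hg) (volume.restrict Ω) α) (hα : 2 * α < 1)
    (hh : MemLorentz Ω σ h) : MemLorentz Ω σ (neumannSum f g h) := by
  refine memLorentz_of_lorentzNorm_lt_top hΩ hE (measurable_neumannSum hf hg hh.1) ?_
  have hle := lorentzNorm_neumannSum_sub_le hΩ hE hκ hα hh 0
  simp only [Finset.range_zero, Finset.sum_empty, sub_zero] at hle
  exact hle.trans_lt (ENNReal.mul_lt_top ENNReal.ofReal_lt_top hh.2.2)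

lemma tendsto_lorentzNorm_sum_sub_neumannSum (hΩ : MeasurableSet Ω)
    (hE : IsQuasiconcave (extInv σ))
    (hκ : IsBoundedKernel (absKernel hf hg) (volume.restrict Ω) α) (hα : 2 * α < 1)
    (hh : MemLorentz Ω σ h) :
    Tendsto (fun m => lorentzNorm Ω σ
      (fun x => (∑ n ∈ Finset.range m, (Pop f g)^[n] h x) - neumannSum f g h x)) atTop (𝓝 0) := by
  have hgeom : Tendsto (fun m : ℕ => (2 * α : ℝ) ^ m / (1 - 2 * α)) atTop (𝓝 0) := by
    simpa using (tendsto_pow_atTop_nhds_zero_of_lt_one (by positivity)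
      (by exact_mod_cast hα : 2 * (α : ℝ) < 1)).div_const (1 - 2 * (α : ℝ))
  have hbound : Tendsto (fun m : ℕ => ENNReal.ofReal ((2 * α) ^ m / (1 - 2 * α)) *
      lorentzNorm Ω σ h) atTop (𝓝 0) := by
    simpa using ENNReal.Tendsto.mul_const (ENNReal.tendsto_ofReal hgeom) (Or.inr hh.2.2.ne)
  refine tendsto_of_tendsto_of_tendsto_of_le_of_le tendsto_const_nhds hbound (fun _ => bot_le)
    fun m => ?_
  rw [lorentzNorm_sub_comm]
  exact lorentzNorm_neumannSum_sub_le hΩ hE hκ hα hh m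

end LorentzSpace

theorem stmt16_general {k N : ℕ} {𝕜 : Type*} [RCLike 𝕜]
    (Ω : Set (EuclideanSpace ℝ (Fin k))) (hΩ : MeasurableSet Ω)
    (f : Fin N → EuclideanSpace ℝ (Fin k) → EuclideanSpace ℝ (Fin k))
    (hmaps : ∀ n, Set.MapsTo (f n) Ω Ω)
    (g : Fin N → EuclideanSpace ℝ (Fin k) → 𝕜) (h0 : EuclideanSpace ℝ (Fin k) → 𝕜)
    (hfmeas : ∀ n, Measurable (f n))
    (hfdiff : ∀ n, ∀ᵐ x ∂(volume.restrict Ω), ∃ L, HasApproxDerivAt Ω (f n) L x)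
    (K : ℕ)
    (hK : ∀ n, volume {x | x ∈ Ω ∧ (K : ℕ∞) < (f n ⁻¹' {x} ∩ Ω).encard} = 0)
    (hgmeas : ∀ n, Measurable (g n))
    (L : ℕ)
    (hL : IsGreatest {l : ℕ | 1 ≤ l ∧ l ≤ N ∧ ∃ s : Finset (Fin N), s.card = l ∧
      0 < volume (⋂ n ∈ s, f n '' Ω)} L)
    (J : Fin N → EuclideanSpace ℝ (Fin k) → ℝ)
    (hJ : ∀ n x, ∀ L', HasApproxDerivAt Ω (f n) L' x → J n x = L'.det)
    (σ : ℝ → ℝ) (hσ : IsQuasiconcave (extInv σ))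
    (hh0 : MemLorentz Ω σ h0)
    (α : ℝ) (hα0 : 0 ≤ α) (hα : α < 1 / 2)
    (hg : ∀ n, ∀ᵐ x ∂(volume.restrict Ω),
      ‖g n x‖ ≤ α * min (|J n x| / ((K : ℝ) * (L : ℝ))) (1 / (N : ℝ))) :
    ∃ φ : EuclideanSpace ℝ (Fin k) → 𝕜, MemLorentz Ω σ φ ∧
      Tendsto (fun m => lorentzNorm Ω σ
          (fun x => (∑ n ∈ Finset.range m, (Pop f g)^[n] h0 x) - φ x))
        atTop (𝓝 0) ∧
      (∀ᵐ x ∂(volume.restrict Ω), φ x = (∑ n : Fin N, g n x * φ (f n x)) + h0 x) ∧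
      (∀ φ' : EuclideanSpace ℝ (Fin k) → 𝕜, MemLorentz Ω σ φ' →
        (∀ᵐ x ∂(volume.restrict Ω), φ' x = (∑ n : Fin N, g n x * φ' (f n x)) + h0 x) →
        φ' =ᵐ[volume.restrict Ω] φ) ∧
      (∀ m : ℕ, lorentzNorm Ω σ
          (fun x => φ x - ∑ n ∈ Finset.range m, (Pop f g)^[n] h0 x) ≤
        ENNReal.ofReal ((2 * α) ^ m / (1 - 2 * α)) * lorentzNorm Ω σ h0) := by
  lift α to ℝ≥0 using hα0
  have hα' : 2 * α < 1 := by
    rw [← NNReal.coe_lt_coe]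
    push_cast
    linarith
  have hκ : IsBoundedKernel (absKernel hfmeas hgmeas) (volume.restrict Ω) α :=
    isBoundedKernel_absKernel hΩ
      (fun n => exists_isInjectiveDecomposition_of_hasApproxDerivAt hΩ (hfmeas n) (hfdiff n) (hJ n))
      hfmeas hgmeas hmaps (fun n => ae_encard_fiber_le (hmaps n) (hK n))
      (measure_iInter_image_eq_zero hL.2) (by simpa only [Fintype.card_fin] using hg)
  have hsum {u : EuclideanSpace ℝ (Fin k) → 𝕜} (hu : MemLorentz Ω σ u) :=
    ae_summable_Pop_iterate_of_memLorentz hΩ hσ hκ hα' hu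
  exact ⟨neumannSum f g h0, memLorentz_neumannSum hΩ hσ hκ hα' hh0,
    tendsto_lorentzNorm_sum_sub_neumannSum hΩ hσ hκ hα' hh0, neumannSum_ae_eq hκ (hsum hh0),
    fun _ hφ' hsol => ae_eq_neumannSum hκ (hsum hh0) (hsum hφ') hsol,
    lorentzNorm_neumannSum_sub_le hΩ hσ hκ hα' hh0⟩

/-- Under hypothesis (H), if `h0 ∈ L^{ψ,1}(Ω,𝕜)` and
`|g_n(x)| ≤ α · min{|J_{f_n}(x)|/(K·L), 1/N}` a.e. for some `α ∈ [0, 1/2)`, then the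
series `∑ Pⁿ h0` converges in `L^{ψ,1}(Ω,𝕜)` to the unique solution `φ` of
`φ = P φ + h0` in `L^{ψ,1}(Ω,𝕜)`, and for every `m`
`‖∑_{n=m}^∞ Pⁿ h0‖ ≤ (2α)^m (1-2α)⁻¹ ‖h0‖`. -/
theorem stmt16 {k N : ℕ} {𝕜 : Type*} [RCLike 𝕜]
    (Ω : Set (EuclideanSpace ℝ (Fin k))) (hΩ : IsOpen Ω)
    (f : Fin N → EuclideanSpace ℝ (Fin k) → EuclideanSpace ℝ (Fin k))
    (hmaps : ∀ n, Set.MapsTo (f n) Ω Ω)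
    (g : Fin N → EuclideanSpace ℝ (Fin k) → 𝕜) (h0 : EuclideanSpace ℝ (Fin k) → 𝕜)
    -- hypothesis (H):
    (hfmeas : ∀ n, Measurable (f n))
    (hfdiff : ∀ n, ∀ᵐ x ∂(volume.restrict Ω), ∃ L, HasApproxDerivAt Ω (f n) L x)
    (hLuzinN : ∀ n, ∀ S ⊆ Ω, volume S = 0 → volume (f n '' S) = 0)
    (hpreim : ∀ n, ∀ M : Set (EuclideanSpace ℝ (Fin k)),
      volume M = 0 → volume (f n ⁻¹' M) = 0)
    (K : ℕ)
    (hK : ∀ n, volume {x | x ∈ Ω ∧ (K : ℕ∞) < (f n ⁻¹' {x} ∩ Ω).encard} = 0)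
    (hgmeas : ∀ n, Measurable (g n)) (hh0meas : Measurable h0)
    (L : ℕ)
    (hL : IsGreatest {l : ℕ | 1 ≤ l ∧ l ≤ N ∧ ∃ s : Finset (Fin N), s.card = l ∧
      0 < volume (⋂ n ∈ s, f n '' Ω)} L)
    -- the (approximate) Jacobians of the maps `f n`:
    (J : Fin N → EuclideanSpace ℝ (Fin k) → ℝ)
    (hJ : ∀ n x, ∀ L', HasApproxDerivAt Ω (f n) L' x → J n x = L'.det)
    (hJ0 : ∀ n x, ¬ (∃ L', HasApproxDerivAt Ω (f n) L' x) → J n x = 0)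
    -- the Young function `ψ`, `τ` and `σ = τ⁻¹`:
    (ψ : ℝ → ℝ) (hY : IsYoung ψ) (hsm : StrictMonoOn ψ (Set.Ici 0)) (hΔ : Delta2 ψ)
    (hψ0 : Tendsto (fun t => ψ t / t) (𝓝[>] 0) (𝓝 0))
    (hψtop : Tendsto (fun t => t / ψ t) atTop (𝓝 0))
    (τ : ℝ → ℝ) (hτ0 : τ 0 = 0) (hτ : ∀ t : ℝ, 0 < t → τ t = 1 / ψ (1 / t))
    (σ : ℝ → ℝ) (hσ_nonneg : ∀ t : ℝ, 0 ≤ t → 0 ≤ σ t)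
    (hσ_left : ∀ t : ℝ, 0 ≤ t → σ (τ t) = t)
    (hσ_right : ∀ t : ℝ, 0 ≤ t → τ (σ t) = t)
    -- `h0 ∈ L^{ψ,1}(Ω,𝕜)`:
    (hh0 : MemLorentz Ω σ h0)
    -- the contraction-type bound on the coefficients:
    (α : ℝ) (hα0 : 0 ≤ α) (hα : α < 1 / 2)
    (hg : ∀ n, ∀ᵐ x ∂(volume.restrict Ω),
      ‖g n x‖ ≤ α * min (|J n x| / ((K : ℝ) * (L : ℝ))) (1 / (N : ℝ))) :
    ∃ φ : EuclideanSpace ℝ (Fin k) → 𝕜, MemLorentz Ω σ φ ∧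
      -- the series `∑_{n=0}^∞ Pⁿ h0` converges in `L^{ψ,1}(Ω,𝕜)` to `φ`
      Tendsto (fun m => lorentzNorm Ω σ
          (fun x => (∑ n ∈ Finset.range m, (Pop f g)^[n] h0 x) - φ x))
        atTop (𝓝 0) ∧
      -- `φ` solves `φ = P φ + h0`
      (∀ᵐ x ∂(volume.restrict Ω), φ x = (∑ n : Fin N, g n x * φ (f n x)) + h0 x) ∧
      -- `φ` is the unique solution in `L^{ψ,1}(Ω,𝕜)`
      (∀ φ' : EuclideanSpace ℝ (Fin k) → 𝕜, MemLorentz Ω σ φ' →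
        (∀ᵐ x ∂(volume.restrict Ω), φ' x = (∑ n : Fin N, g n x * φ' (f n x)) + h0 x) →
        φ' =ᵐ[volume.restrict Ω] φ) ∧
      -- the norm estimate for the tails `∑_{n=m}^∞ Pⁿ h0 = φ - ∑_{n<m} Pⁿ h0`
      (∀ m : ℕ, lorentzNorm Ω σ
          (fun x => φ x - ∑ n ∈ Finset.range m, (Pop f g)^[n] h0 x) ≤
        ENNReal.ofReal ((2 * α) ^ m / (1 - 2 * α)) * lorentzNorm Ω σ h0) :=
  stmt16_general Ω hΩ.measurableSet f hmaps g h0 hfmeas hfdiff K hK hgmeas L hL J hJ σ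
    (isQuasiconcave_extInv hY.2.1 hsm hY.2.2.2.1 hτ0 hτ hσ_nonneg ⟨hσ_left, hσ_right⟩)
    hh0 α hα0 hα hg
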